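/- arXiv:2412.01602 — 2 statements merged into one kernel-verified Lean document; each statement's English description precedes it below -/
import Mathlib

section
/- Let G = (V,E) be a graph without isolated vertices. The h*-polynomial of the cosmological polytope C_G is palindromic, i.e., h*_i(C_G) = h*_{|E|−i}(C_G) for all 0 ≤ i ≤ |E| (equivalently, C_G is Gorenstein), if and only if every edge of G is a loop. -/
open Polynomial Pointwise

/-- The set of vertices (generating points) of the cosmological polytope of the
multigraph with edge-endpoint map `ends : E → Sym2 V`. -/
def cosmoVertices {V E : Type*} [DecidableEq V] [DecidableEq E] (ends : E → Sym2 V) :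
    Set ((V ⊕ E) → ℝ) :=
  { x | ∃ (f : E) (i j : V), ends f = s(i, j) ∧
      (x = Pi.single (Sum.inl i) 1 + Pi.single (Sum.inl j) 1 - Pi.single (Sum.inr f) 1 ∨
       x = Pi.single (Sum.inl i) 1 - Pi.single (Sum.inl j) 1 + Pi.single (Sum.inr f) 1 ∨
       x = -Pi.single (Sum.inl i) 1 + Pi.single (Sum.inl j) 1 + Pi.single (Sum.inr f) 1) }

/-- The cosmological polytope of a multigraph. -/
def cosmoPolytope {V E : Type*} [DecidableEq V] [DecidableEq E] (ends : E → Sym2 V) :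
    Set ((V ⊕ E) → ℝ) :=
  convexHull ℝ (cosmoVertices ends)

/-- Number of lattice points of the `t`-th dilate of `P`. -/
noncomputable def latticePointCount {ι : Type*} (P : Set (ι → ℝ)) (t : ℕ) : ℕ :=
  Set.ncard { x : ι → ℤ | (fun k => (x k : ℝ)) ∈ (t : ℝ) • P }

/-- The Ehrhart series of `P` as a formal power series. -/
noncomputable def ehrhartSeries {ι : Type*} (P : Set (ι → ℝ)) : PowerSeries ℚ :=
  PowerSeries.mk fun t => if t = 0 then 1 else (latticePointCount P t : ℚ)

/-- `h` is the `h^*`-polynomial of the `d`-dimensional lattice polytope `P`: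
`Ehr(P; z) = h(z) / (1-z)^(d+1)` as formal power series. -/
def IsHStarPoly {ι : Type*} (P : Set (ι → ℝ)) (d : ℕ) (h : Polynomial ℚ) : Prop :=
  ehrhartSeries P * (1 - PowerSeries.X) ^ (d + 1) = (h : PowerSeries ℚ)

/-- Adjacency relation of the multigraph given by `ends`. -/
def multigraphAdj {V E : Type*} (ends : E → Sym2 V) (i j : V) : Prop :=
  ∃ f, ends f = s(i, j)

/-- Reachability in the multigraph given by `ends`. -/
def multigraphReach {V E : Type*} (ends : E → Sym2 V) : V → V → Prop :=
  Relation.ReflTransGen (multigraphAdj ends)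

/-- The number of connected components of the multigraph given by `ends`. -/
noncomputable def numComponents {V E : Type*} (ends : E → Sym2 V) : ℕ :=
  Nat.card (Quot (multigraphReach ends))



namespace Cosmo
open Finset

/-- cut indicator -/
def ccut {V : Type*} [DecidableEq V] (S : Finset V) (p : V × V) : ℤ :=
  if (p.1 ∈ S ↔ p.2 ∈ S) then 0 else 1

lemma ccut_nonneg {V : Type*} [DecidableEq V] (S : Finset V) (p : V × V) : 0 ≤ ccut S p := by
  unfold ccut; split_ifs <;> simp

lemma ccut_le_one {V : Type*} [DecidableEq V] (S : Finset V) (p : V × V) : ccut S p ≤ 1 := by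
  unfold ccut; split_ifs <;> simp

lemma ccut_submod {V : Type*} [DecidableEq V] (S T : Finset V) (p : V × V) :
    ccut (S ∪ T) p + ccut (S ∩ T) p ≤ ccut S p + ccut T p := by
  unfold ccut
  simp only [mem_union, mem_inter]
  by_cases h1 : p.1 ∈ S <;> by_cases h2 : p.1 ∈ T <;> by_cases h3 : p.2 ∈ S <;>
    by_cases h4 : p.2 ∈ T <;> simp [h1, h2, h3, h4]

lemma ccut_loop {V : Type*} [DecidableEq V] (S : Finset V) (p : V × V) (h : p.1 = p.2) :
    ccut S p = 0 := by
  simp [ccut, h]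

/-- The interval lemma. -/
lemma interval_lemma {V : Type*} [Fintype V] [DecidableEq V] (ψ : Finset V → ℤ)
    (hsub : ∀ S T, ψ (S ∪ T) + ψ (S ∩ T) ≤ ψ S + ψ T) (p : V × V) (hp : p.1 ≠ p.2)
    (hns : ∀ S, (p.1 ∈ S ↔ p.2 ∈ S) → 0 ≤ ψ S) :
    ∃ L U : ℤ, L ≤ U ∧ ∀ k x : ℤ,
      (∀ S, 0 ≤ ψ S + x * ((if p.1 ∈ S then 1 else 0) - (if p.2 ∈ S then 1 else 0))
        + k * ccut S p) ↔ (L - k ≤ x ∧ x ≤ U + k) := by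
  obtain ⟨A, hA, hAm⟩ := Finset.exists_min_image
    ((univ : Finset (Finset V)).filter (fun S => p.1 ∈ S ∧ p.2 ∉ S)) ψ
    ⟨{p.1}, by simp [hp.symm]⟩
  obtain ⟨B, hB, hBm⟩ := Finset.exists_min_image
    ((univ : Finset (Finset V)).filter (fun S => p.2 ∈ S ∧ p.1 ∉ S)) ψ
    ⟨{p.2}, by simp [hp]⟩
  simp only [mem_filter, mem_univ, true_and] at hA hB hAm hBm
  refine ⟨-ψ A, ψ B, ?_, ?_⟩
  · have h1 := hsub A B
    have h2 := hns (A ∪ B) (by simp [hA, hB])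
    have h3 := hns (A ∩ B) (by simp [hA, hB])
    linarith
  · intro k x
    constructor
    · intro h
      have h1 := h A
      have h2 := h B
      simp [hA, hB, ccut] at h1 h2
      constructor <;> linarith
    · rintro ⟨h1, h2⟩ S
      by_cases hi : p.1 ∈ S <;> by_cases hj : p.2 ∈ S
      · have := hns S (by simp [hi, hj])
        simp [hi, hj, ccut, this]
      · have := hAm S ⟨hi, hj⟩
        simp [hi, hj, ccut]; linarith
      · have := hBm S ⟨hj, hi⟩
        simp [hi, hj, ccut]; linarith
      · have := hns S (by simp [hi, hj])
        simp [hi, hj, ccut, this]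

lemma sum_submod {V E : Type*} [Fintype V] [DecidableEq V] (a : V → ℤ) (c : E → ℤ)
    (hc : ∀ f, 0 ≤ c f) (e : E → V × V) (W : Finset E) (S T : Finset V) :
    (∑ v ∈ S ∪ T, a v + ∑ f ∈ W, c f * ccut (S ∪ T) (e f)) +
    (∑ v ∈ S ∩ T, a v + ∑ f ∈ W, c f * ccut (S ∩ T) (e f)) ≤
    (∑ v ∈ S, a v + ∑ f ∈ W, c f * ccut S (e f)) +
    (∑ v ∈ T, a v + ∑ f ∈ W, c f * ccut T (e f)) := by
  have h1 : ∑ v ∈ S ∪ T, a v + ∑ v ∈ S ∩ T, a v = ∑ v ∈ S, a v + ∑ v ∈ T, a v :=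
    Finset.sum_union_inter
  have h2 : ∑ f ∈ W, c f * ccut (S ∪ T) (e f) + ∑ f ∈ W, c f * ccut (S ∩ T) (e f) ≤
      ∑ f ∈ W, c f * ccut S (e f) + ∑ f ∈ W, c f * ccut T (e f) := by
    rw [← Finset.sum_add_distrib, ← Finset.sum_add_distrib]
    refine Finset.sum_le_sum fun f _ => ?_
    rw [← mul_add, ← mul_add]
    exact mul_le_mul_of_nonneg_left (ccut_submod S T (e f)) (hc f)
  linarith

/-- `e_i - e_j`. -/
def dvec {V : Type*} [DecidableEq V] (p : V × V) (v : V) : ℤ :=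
  (if v = p.1 then 1 else 0) - (if v = p.2 then 1 else 0)

lemma sum_dvec {V : Type*} [DecidableEq V] (p : V × V) (S : Finset V) :
    ∑ v ∈ S, dvec p v = (if p.1 ∈ S then 1 else 0) - (if p.2 ∈ S then 1 else 0) := by
  simp [dvec, Finset.sum_sub_distrib]

/-- Flow decomposition. -/
lemma flow_lemma {V E : Type*} [Fintype V] [DecidableEq V] [DecidableEq E] (c : E → ℤ)
    (hc : ∀ f, 0 ≤ c f) (e : E → V × V) (W : Finset E) : ∀ a : V → ℤ,
    (∀ S : Finset V, 0 ≤ ∑ v ∈ S, a v + ∑ f ∈ W, c f * ccut S (e f)) →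
    ∃ g : E → ℤ, (∀ f, |g f| ≤ c f) ∧ ∀ v, 0 ≤ a v - ∑ f ∈ W, g f * dvec (e f) v := by
  induction W using Finset.induction_on with
  | empty =>
    intro a h
    refine ⟨0, by simpa using hc, fun v => ?_⟩
    have := h {v}
    simpa using this
  | insert f0 W hf0 ih =>
    intro a h
    by_cases hl : (e f0).1 = (e f0).2
    · obtain ⟨g, hg, hg2⟩ := ih a (fun S => by
        have := h S
        rw [Finset.sum_insert hf0, ccut_loop _ _ hl] at this
        simpa using this)
      refine ⟨g, hg, fun v => ?_⟩
      rw [Finset.sum_insert hf0]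
      have := hg2 v
      simpa [dvec, hl] using this
    · obtain ⟨L, U, hLU, hint⟩ := interval_lemma
        (fun S => ∑ v ∈ S, a v + ∑ f ∈ W, c f * ccut S (e f))
        (fun S T => sum_submod a c hc e W S T) (e f0) hl (fun S hS => by
          have := h S
          rw [Finset.sum_insert hf0] at this
          simpa [ccut, hS] using this)
      have h0 := (hint (c f0) 0).1 (fun S => by
          have := h S
          rw [Finset.sum_insert hf0] at this
          linarith)
      set x := max L (min 0 U) with hx
      have hcf := hc f0
      have hxL : L ≤ x ∧ x ≤ U ∧ |x| ≤ c f0 := by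
        rw [abs_le]; omega
      have h1 := (hint 0 x).2 ⟨by linarith, by linarith⟩
      obtain ⟨g, hg, hg2⟩ := ih (fun v => a v + x * dvec (e f0) v) (fun S => by
        have := h1 S
        rw [Finset.sum_add_distrib, ← Finset.mul_sum, sum_dvec]
        linarith)
      refine ⟨Function.update g f0 (-x), fun f => ?_, fun v => ?_⟩
      · by_cases hf : f = f0
        · subst hf; simpa using hxL.2.2
        · simpa [Function.update_of_ne hf] using hg f
      · rw [Finset.sum_insert hf0]
        have h3 : ∑ f ∈ W, Function.update g f0 (-x) f * dvec (e f) v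
            = ∑ f ∈ W, g f * dvec (e f) v := by
          refine Finset.sum_congr rfl fun f hf => ?_
          rw [Function.update_of_ne (by rintro rfl; exact hf0 hf)]
        rw [h3]
        have := hg2 v
        simp only [Function.update_self]
        linarith

/-- the combinatorial lattice point set -/
def XS {V E : Type*} [Fintype V] [Fintype E] [DecidableEq V] (e : E → V × V) (p : V × V)
    (k t : ℤ) : Set ((V → ℤ) × (E → ℤ)) :=
  {q | (∀ S : Finset V, 0 ≤ ∑ v ∈ S, q.1 v + ∑ f, max (q.2 f) 0 * ccut S (e f) + k * ccut S p) ∧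
    ∑ v, q.1 v + ∑ f, |q.2 f| = t}

def X0 {V E : Type*} [Fintype V] [Fintype E] [DecidableEq V] (e : E → V × V)
    (t : ℤ) : Set ((V → ℤ) × (E → ℤ)) :=
  {q | (∀ S : Finset V, 0 ≤ ∑ v ∈ S, q.1 v + ∑ f, max (q.2 f) 0 * ccut S (e f)) ∧
    ∑ v, q.1 v + ∑ f, |q.2 f| = t}

lemma XS_zero {V E : Type*} [Fintype V] [Fintype E] [DecidableEq V] (e : E → V × V) (p : V × V)
    (t : ℤ) : XS e p 0 t = X0 e t := by
  simp [XS, X0]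

lemma XS_loop {V E : Type*} [Fintype V] [Fintype E] [DecidableEq V] (e : E → V × V) (p : V × V)
    (hp : p.1 = p.2) (k t : ℤ) : XS e p k t = X0 e t := by
  simp [XS, X0, ccut_loop _ _ hp]

lemma XS_finite {V E : Type*} [Fintype V] [Fintype E] [DecidableEq V] (e : E → V × V) (p : V × V)
    (k t : ℤ) (hk : 0 ≤ k) : (XS e p k t).Finite := by
  classical
  refine (Set.finite_Icc ((fun _ => -(t+k), fun _ => -t) : (V → ℤ) × (E → ℤ))
    ((fun _ => 2*t+k, fun _ => t) : (V → ℤ) × (E → ℤ))).subset ?_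
  rintro ⟨a, b⟩ ⟨h, hs⟩
  simp only at h hs
  have hcu : ∀ q : V × V, ccut univ q = 0 := fun q => by simp [ccut]
  have ha : 0 ≤ ∑ v, a v := by
    have := h univ
    simpa [hcu] using this
  have hbs : ∑ f, |b f| ≤ t := by linarith
  have hb : ∀ f, |b f| ≤ t := fun f =>
    (Finset.single_le_sum (f := fun f => |b f|) (fun f _ => abs_nonneg _) (mem_univ f)).trans hbs
  have hcut : ∀ S : Finset V, ∑ f, max (b f) 0 * ccut S (e f) + k * ccut S p ≤ t + k := by
    intro S
    have h1 : ∑ f, max (b f) 0 * ccut S (e f) ≤ ∑ f, |b f| := by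
      refine Finset.sum_le_sum fun f _ => ?_
      have h2 : max (b f) 0 ≤ |b f| := max_le (le_abs_self _) (abs_nonneg _)
      have h3 := ccut_le_one S (e f)
      have h4 : 0 ≤ max (b f) 0 := le_max_right _ _
      nlinarith
    have h5 := ccut_le_one S p
    nlinarith
  have hlow : ∀ v, -(t+k) ≤ a v := fun v => by
    have h1 := h {v}
    have h2 := hcut {v}
    simp only [sum_singleton] at h1
    linarith
  have hup : ∀ v, a v ≤ 2*t+k := fun v => by
    have h1 := h (univ.erase v)
    have h2 := hcut (univ.erase v)
    have h3 := Finset.add_sum_erase univ a (mem_univ v)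
    have h4 : 0 ≤ ∑ f, |b f| := Finset.sum_nonneg fun f _ => abs_nonneg _
    linarith
  exact ⟨⟨hlow, fun f => (abs_le.1 (hb f)).1⟩, ⟨hup, fun f => (abs_le.1 (hb f)).2⟩⟩

end Cosmo

namespace Cosmo
open Finset
set_option linter.unusedSectionVars false

section contraction
variable {V : Type*} [Fintype V] [DecidableEq V] (p : V × V) (hp : p.1 ≠ p.2)

/-- contraction map -/
def cpi (v : V) : {v : V // v ≠ p.2} := if h : v = p.2 then ⟨p.1, hp⟩ else ⟨v, h⟩

/-- push forward of vertex weights along the contraction -/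
def push (a : V → ℤ) (v : {v : V // v ≠ p.2}) : ℤ := a v + if (v : V) = p.1 then a p.2 else 0

/-- preimage of a vertex set -/
def pre (S : Finset {v : V // v ≠ p.2}) : Finset V := univ.filter (fun v => cpi p hp v ∈ S)

lemma cpi_two : cpi p hp p.2 = ⟨p.1, hp⟩ := by simp [cpi]

lemma cpi_of_ne (v : V) (h : v ≠ p.2) : cpi p hp v = ⟨v, h⟩ := by simp [cpi, h]

lemma sum_push (a : V → ℤ) (S : Finset {v : V // v ≠ p.2}) :
    ∑ v ∈ S, push p a v = ∑ v ∈ pre p hp S, a v := by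
  rw [pre, Finset.sum_filter, Fintype.sum_eq_add_sum_subtype_ne _ p.2, cpi_two]
  have h1 : ∀ v : {v : V // v ≠ p.2}, cpi p hp v = v := fun v => by
    rw [cpi_of_ne p hp v v.2]
  simp only [h1, push]
  rw [Finset.sum_add_distrib, add_comm]
  congr 1
  · have : ∀ v : {v : V // v ≠ p.2}, ((v : V) = p.1) ↔ v = ⟨p.1, hp⟩ := fun v => by
      rw [Subtype.ext_iff]
    simp only [this]
    simp
  · simp

lemma pre_univ : pre p hp univ = univ := by simp [pre]

lemma ccut_pre (S : Finset {v : V // v ≠ p.2}) (q : V × V) :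
    ccut S (cpi p hp q.1, cpi p hp q.2) = ccut (pre p hp S) q := by
  simp [ccut, pre]

lemma pre_nonsep (S : Finset {v : V // v ≠ p.2}) : (p.1 ∈ pre p hp S ↔ p.2 ∈ pre p hp S) := by
  simp [pre, cpi_two, cpi_of_ne p hp p.1 hp]

lemma exists_pre (S : Finset V) (h : p.1 ∈ S ↔ p.2 ∈ S) : ∃ S', pre p hp S' = S := by
  refine ⟨univ.filter (fun v => (v : V) ∈ S), ?_⟩
  ext v
  by_cases hv : v = p.2
  · subst hv
    simp [pre, cpi_two, h]
  · simp [pre, cpi_of_ne p hp v hv]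

lemma push_add_dvec (hp : p.1 ≠ p.2) (a : V → ℤ) (x : ℤ) :
    push p (fun v => a v + x * dvec p v) = push p a := by
  funext v
  have hv := v.2
  by_cases h : (v : V) = p.1
  · simp [push, dvec, h, hp.symm, hp]; ring
  · simp [push, dvec, h, hv]

/-- canonical lift -/
def lift0 (a : {v : V // v ≠ p.2} → ℤ) (v : V) : ℤ := if h : v = p.2 then 0 else a ⟨v, h⟩

lemma push_lift0 (a : {v : V // v ≠ p.2} → ℤ) : push p (lift0 p a) = a := by
  funext v
  have hv := v.2
  simp [push, lift0, hv]

lemma push_eq_iff (hp : p.1 ≠ p.2) (a : V → ℤ) (a' : {v : V // v ≠ p.2} → ℤ) :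
    push p a = a' ↔ ∃ x : ℤ, a = fun v => lift0 p a' v + x * dvec p v := by
  constructor
  · rintro rfl
    refine ⟨- a p.2, ?_⟩
    funext v
    by_cases hv : v = p.2
    · subst hv
      simp [lift0, dvec, hp.symm]
    · by_cases h : v = p.1
      · subst h
        simp [lift0, dvec, hp, push]
      · simp [lift0, dvec, hv, h, push]
  · rintro ⟨x, rfl⟩
    rw [push_add_dvec p hp, push_lift0]

variable {E : Type*} [Fintype E] (e : E → V × V)

/-- contracted graph -/
def con (f : E) : {v : V // v ≠ p.2} × {v : V // v ≠ p.2} := (cpi p hp (e f).1, cpi p hp (e f).2)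

lemma push_mem (k t : ℤ) (q : (V → ℤ) × (E → ℤ)) (hq : q ∈ XS e p k t) :
    (push p q.1, q.2) ∈ X0 (con p hp e) t := by
  obtain ⟨h1, h2⟩ := hq
  refine ⟨fun S => ?_, ?_⟩
  · have := h1 (pre p hp S)
    simp only [sum_push p hp, con, ccut_pre]
    have h0 : ccut (pre p hp S) p = 0 := by
      have := pre_nonsep p hp S
      simp [ccut, this]
    rw [h0] at this
    simpa using this
  · simp only [sum_push p hp, pre_univ]
    exact h2

lemma fiber_card (t : ℤ) (q' : ({v : V // v ≠ p.2} → ℤ) × (E → ℤ))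
    (hq : q' ∈ X0 (con p hp e) t) :
    ∃ n : ℤ, ∀ k : ℤ, 0 ≤ k →
      (Set.ncard {q | q ∈ XS e p k t ∧ (push p q.1, q.2) = q'} : ℤ) = n + 2 * k := by
  obtain ⟨a', b⟩ := q'
  obtain ⟨h1, h2⟩ := hq
  simp only at h1 h2
  obtain ⟨L, U, hLU, hint⟩ := interval_lemma
        (fun S => ∑ v ∈ S, lift0 p a' v + ∑ f, max (b f) 0 * ccut S (e f))
        (fun S T => sum_submod (lift0 p a') (fun f => max (b f) 0) (fun f => le_max_right _ _)
          e univ S T) p hp (fun S hS => by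
          obtain ⟨S', rfl⟩ := exists_pre p hp S hS
          have := h1 S'
          rw [← sum_push, push_lift0]
          simpa only [con, ccut_pre] using this)
  refine ⟨U - L + 1, fun k hk => ?_⟩
  have hset : {q | q ∈ XS e p k t ∧ (push p q.1, q.2) = (a', b)} =
      (fun x : ℤ => ((fun v => lift0 p a' v + x * dvec p v, b) : (V → ℤ) × (E → ℤ))) ''
        (Finset.Icc (L - k) (U + k) : Finset ℤ) := by
    ext ⟨a, b'⟩
    simp only [Set.mem_ofPred_eq, Prod.mk.injEq, Set.mem_image, Finset.coe_Icc, Set.mem_Icc]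
    rw [push_eq_iff p hp]
    have key : ∀ x : ℤ, ((fun v => lift0 p a' v + x * dvec p v, b) : (V → ℤ) × (E → ℤ)) ∈
        XS e p k t ↔ L - k ≤ x ∧ x ≤ U + k := by
      intro x
      rw [← hint k x]
      have hs : ∑ v, (lift0 p a' v + x * dvec p v) + ∑ f, |b f| = t := by
        rw [Finset.sum_add_distrib, ← Finset.mul_sum, sum_dvec, ← pre_univ p hp, ← sum_push,
          push_lift0, pre_univ]
        simpa using h2
      simp only [XS, Set.mem_ofPred_eq, hs, and_true]
      refine forall_congr' fun S => ?_
      rw [Finset.sum_add_distrib, ← Finset.mul_sum, sum_dvec]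
      ring_nf
    constructor
    · rintro ⟨hm, ⟨x, rfl⟩, rfl⟩
      exact ⟨x, (key x).1 hm, rfl, rfl⟩
    · rintro ⟨x, hx, rfl, rfl⟩
      exact ⟨(key x).2 hx, ⟨x, rfl⟩, rfl⟩
  rw [hset, Set.ncard_image_of_injective, Set.ncard_coe_finset, Int.card_Icc]
  · rw [Int.toNat_of_nonneg (by linarith)]; ring
  · intro x y hxy
    simp only [Prod.mk.injEq, and_true] at hxy
    have := congrFun hxy p.2
    simp [dvec, hp.symm] at this
    exact this

lemma X0_finite {V E : Type*} [Fintype V] [Fintype E] [DecidableEq V] (e : E → V × V) (t : ℤ) :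
    (X0 e t).Finite := by
  by_cases h : Nonempty V
  · obtain ⟨v⟩ := h
    rw [← XS_zero e (v, v)]
    exact XS_finite _ _ _ _ le_rfl
  · have : IsEmpty V := not_nonempty_iff.1 h
    have : IsEmpty E := ⟨fun f => this.elim (e f).1⟩
    exact Set.toFinite _

lemma XS_card (k t : ℤ) (hk : 0 ≤ k) :
    ((XS e p k t).ncard : ℤ) = (X0 e t).ncard + 2 * k * (X0 (con p hp e) t).ncard := by
  classical
  have hfib : ∀ k : ℤ, 0 ≤ k → ((XS e p k t).ncard : ℤ) =
      ∑ q' ∈ (X0_finite (con p hp e) t).toFinset,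
        (Set.ncard {q | q ∈ XS e p k t ∧ (push p q.1, q.2) = q'} : ℤ) := by
    intro k hk
    rw [Set.ncard_eq_toFinset_card _ (XS_finite e p k t hk),
      Finset.card_eq_sum_card_fiberwise (f := fun q => (push p q.1, q.2))
        (t := (X0_finite (con p hp e) t).toFinset)]
    · push_cast
      refine Finset.sum_congr rfl fun q' _ => ?_
      rw [← Set.ncard_coe_finset]
      congr 2
      ext q
      simp
    · intro q hq
      simp only [Set.Finite.coe_toFinset] at hq ⊢
      exact push_mem p hp e k t q hq
  have h0 := hfib 0 le_rfl
  rw [XS_zero] at h0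
  rw [hfib k hk, h0, Set.ncard_eq_toFinset_card _ (X0_finite (con p hp e) t), mul_comm,
    ← nsmul_eq_mul, ← Finset.sum_const, ← Finset.sum_add_distrib]
  refine Finset.sum_congr rfl fun q' hq' => ?_
  obtain ⟨n, hn⟩ := fiber_card p hp e t q' (by simpa using hq')
  have e1 := hn k hk
  have e0 := hn 0 le_rfl
  rw [XS_zero] at e0
  linarith

end contraction

end Cosmo

namespace Cosmo
open Finset

/-- generating function -/
noncomputable def cnt {V E : Type*} [Fintype V] [Fintype E] [DecidableEq V] (e : E → V × V) :
    PowerSeries ℚ := PowerSeries.mk fun t => ((X0 e (t : ℤ)).ncard : ℚ)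

lemma cnt_empty {V E : Type*} [Fintype V] [Fintype E] [IsEmpty E] [DecidableEq V] (e : E → V × V) :
    cnt e * (1 - PowerSeries.X) ^ (Fintype.card V) = 1 := by
  have h : cnt e = (PowerSeries.mk 1 : PowerSeries ℚ) ^ (Fintype.card V) := by
    have h1 : (PowerSeries.mk 1 : PowerSeries ℚ) ^ (Fintype.card V) =
        ∏ _v : V, (PowerSeries.mk 1 : PowerSeries ℚ) := by simp
    rw [h1]
    ext t
    rw [PowerSeries.coeff_prod, cnt, PowerSeries.coeff_mk]
    simp only [PowerSeries.coeff_mk, Pi.one_apply, prod_const_one, sum_const, nsmul_eq_mul, mul_one]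
    congr 1
    have hset : X0 e (t : ℤ) = (fun l : V →₀ ℕ => ((fun v => (l v : ℤ), fun _ => 0) :
        (V → ℤ) × (E → ℤ))) '' (finsuppAntidiag univ t : Finset (V →₀ ℕ)) := by
      ext ⟨a, b⟩
      simp only [X0, Set.mem_ofPred_eq, Set.mem_image, mem_coe, mem_finsuppAntidiag,
        Prod.mk.injEq, univ_eq_empty, sum_empty, add_zero]
      constructor
      · rintro ⟨h1, h2⟩
        have ha : ∀ v, 0 ≤ a v := fun v => by simpa using h1 {v}
        refine ⟨Finsupp.equivFunOnFinite.symm (fun v => (a v).toNat), ⟨?_, by simp⟩, ?_, ?_⟩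
        · zify
          simp [ha, h2]
        · funext v; simp [ha]
        · exact Subsingleton.elim _ _
      · rintro ⟨l, ⟨h1, _⟩, rfl, rfl⟩
        refine ⟨fun S => Finset.sum_nonneg fun v _ => by positivity, ?_⟩
        rw [← h1]; simp
    rw [hset, Set.ncard_image_of_injective, Set.ncard_coe_finset]
    intro l l' hl
    simp only [Prod.mk.injEq, and_true] at hl
    ext v
    have := congrFun hl v
    exact_mod_cast this
  rw [h, ← mul_pow, PowerSeries.mk_one_mul_one_sub_eq_one, one_pow]

lemma slice {V : Type*} [Fintype V] [DecidableEq V] {n : ℕ} (e : Fin (n+1) → V × V) (t : ℕ) :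
    (X0 e (t : ℤ)).ncard = ∑ k ∈ Icc (-(t : ℤ)) t,
      (XS (fun f : Fin n => e f.succ) (e 0) (max k 0) (t - |k|)).ncard := by
  classical
  rw [Set.ncard_eq_toFinset_card _ (X0_finite e t),
      Finset.card_eq_sum_card_fiberwise (f := fun q => q.2 0) (t := Icc (-(t : ℤ)) t)]
  · refine Finset.sum_congr rfl fun k _ => ?_
    rw [← Set.ncard_coe_finset]
    have hset : (↑({q ∈ (X0_finite e t).toFinset | q.2 0 = k}) : Set ((V → ℤ) × (Fin (n+1) → ℤ))) =
        (fun q : (V → ℤ) × (Fin n → ℤ) => (q.1, (Fin.cons k q.2 : Fin (n+1) → ℤ))) ''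
        (XS (fun f : Fin n => e f.succ) (e 0) (max k 0) (t - |k|)) := by
      have key : ∀ (a : V → ℤ) (b : Fin n → ℤ),
          (a, (Fin.cons k b : Fin (n+1) → ℤ)) ∈ X0 e t ↔
          (a, b) ∈ XS (fun f : Fin n => e f.succ) (e 0) (max k 0) (t - |k|) := by
        intro a b
        simp only [X0, XS, Set.mem_ofPred_eq, Fin.sum_univ_succ, Fin.cons_zero, Fin.cons_succ]
        refine and_congr (forall_congr' fun S => ?_) ?_
        · constructor <;> intro h <;> linarith
        · constructor <;> intro h <;> linarith
      ext ⟨a, b⟩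
      simp only [coe_filter, Set.Finite.mem_toFinset, Set.mem_ofPred_eq, Set.mem_image,
        Prod.mk.injEq]
      constructor
      · rintro ⟨h1, h2⟩
        refine ⟨(a, fun f => b f.succ), ?_, rfl, ?_⟩
        · rw [← key]
          convert h1 using 2
          subst h2
          exact Fin.cons_self_tail b
        · subst h2
          exact Fin.cons_self_tail b
      · rintro ⟨⟨a', b'⟩, h1, rfl, rfl⟩
        exact ⟨(key _ _).2 h1, by simp⟩
    rw [hset, Set.ncard_image_of_injective]
    rintro ⟨a, b⟩ ⟨a', b'⟩ h
    simp only [Prod.mk.injEq] at h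
    obtain ⟨rfl, h⟩ := h
    rw [(Fin.cons_injective2 h).2]
  · rintro ⟨a, b⟩ hq
    simp only [Set.Finite.coe_toFinset] at hq
    obtain ⟨h1, h2⟩ := hq
    simp only at h1 h2
    have hcu : ∀ q : V × V, ccut univ q = 0 := fun q => by simp [ccut]
    have h3 : 0 ≤ ∑ v, a v := by simpa [hcu] using h1 univ
    have h4 := Finset.single_le_sum (f := fun f => |b f|) (fun f _ => abs_nonneg _)
      (mem_univ 0)
    have h5 : |b 0| ≤ t := by linarith
    simpa using abs_le.1 h5

lemma sum_Icc_sym (F : ℤ → ℚ) (t : ℕ) : ∑ k ∈ Icc (-(t : ℤ)) t, F k =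
    ∑ m ∈ range (t+1), (F m + if m = 0 then 0 else F (-m)) := by
  induction t with
  | zero => simp
  | succ t ih =>
    rw [Finset.sum_range_succ, ← ih]
    have : Icc (-((t+1 : ℕ) : ℤ)) ((t+1 : ℕ) : ℤ) =
        insert ((t+1 : ℕ) : ℤ) (insert (-((t+1 : ℕ) : ℤ)) (Icc (-(t : ℤ)) t)) := by
      ext x; simp only [mem_Icc, mem_insert]; omega
    rw [this, Finset.sum_insert, Finset.sum_insert]
    · simp; ring
    · simp only [mem_Icc]; omega
    · simp only [mem_Icc, mem_insert]; omega

/-- series of `1 + 2z + 2z^2 + ...` -/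
noncomputable def PP : PowerSeries ℚ := PowerSeries.mk fun m => if m = 0 then 1 else 2
/-- series of `2 m z^m` -/
noncomputable def QQ : PowerSeries ℚ := PowerSeries.mk fun m => 2 * (m : ℚ)

lemma PP_mul : PP * (1 - PowerSeries.X) = 1 + PowerSeries.X := by
  ext n
  rw [mul_sub, mul_one, map_sub, map_add]
  rcases n with _ | _ | n
  · simp [PP]
  · rw [PowerSeries.coeff_succ_mul_X]
    simp [PP, PowerSeries.coeff_one]; norm_num
  · rw [PowerSeries.coeff_succ_mul_X]
    simp [PP, PowerSeries.coeff_one, PowerSeries.coeff_X]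

lemma QQ_mul : QQ * (1 - PowerSeries.X) ^ 2 = 2 * PowerSeries.X := by
  have h1 : QQ * (1 - PowerSeries.X) = 2 * (PowerSeries.X * PowerSeries.mk 1) := by
    ext n
    rw [mul_sub, mul_one, map_sub, two_mul, map_add]
    rcases n with _ | n
    · simp [QQ]
    · rw [PowerSeries.coeff_succ_mul_X, PowerSeries.coeff_succ_X_mul]
      simp [QQ]; ring
  rw [pow_two, ← mul_assoc, h1, mul_assoc, mul_assoc, PowerSeries.mk_one_mul_one_sub_eq_one,
    mul_one]

lemma cnt_loop {V : Type*} [Fintype V] [DecidableEq V] {n : ℕ} (e : Fin (n+1) → V × V)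
    (h : (e 0).1 = (e 0).2) : cnt e = PP * cnt (fun f : Fin n => e f.succ) := by
  ext t
  rw [PowerSeries.coeff_mul, cnt, PowerSeries.coeff_mk, slice]
  simp only [XS_loop _ _ h]
  rw [Nat.cast_sum, sum_Icc_sym, Finset.Nat.sum_antidiagonal_eq_sum_range_succ
    (fun i j => PowerSeries.coeff i PP * PowerSeries.coeff j (cnt (fun f : Fin n => e f.succ)))]
  refine Finset.sum_congr rfl fun m hm => ?_
  have hm' : m ≤ t := by simpa [Nat.lt_succ_iff] using hm
  simp only [PP, cnt, PowerSeries.coeff_mk, abs_neg, Nat.abs_cast, Nat.cast_sub hm']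
  split_ifs <;> ring

lemma cnt_nonloop {V : Type*} [Fintype V] [DecidableEq V] {n : ℕ} (e : Fin (n+1) → V × V)
    (h : (e 0).1 ≠ (e 0).2) : cnt e = PP * cnt (fun f : Fin n => e f.succ) +
      QQ * cnt (con (e 0) h (fun f : Fin n => e f.succ)) := by
  ext t
  rw [map_add, PowerSeries.coeff_mul, PowerSeries.coeff_mul, cnt, PowerSeries.coeff_mk, slice]
  have hX : ∀ k t : ℤ, ((XS (fun f : Fin n => e f.succ) (e 0) (max k 0) t).ncard : ℚ) =
      (X0 (fun f : Fin n => e f.succ) t).ncard + 2 * ((max k 0 : ℤ) : ℚ) *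
        (X0 (con (e 0) h (fun f : Fin n => e f.succ)) t).ncard := fun k t => by
    exact_mod_cast XS_card (e 0) h (fun f : Fin n => e f.succ) (max k 0) t (le_max_right _ _)
  rw [Nat.cast_sum]
  simp only [hX]
  rw [sum_Icc_sym, Finset.Nat.sum_antidiagonal_eq_sum_range_succ
    (fun i j => PowerSeries.coeff i PP * PowerSeries.coeff j (cnt (fun f : Fin n => e f.succ))),
    Finset.Nat.sum_antidiagonal_eq_sum_range_succ
    (fun i j => PowerSeries.coeff i QQ *
      PowerSeries.coeff j (cnt (con (e 0) h (fun f : Fin n => e f.succ)))),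
    ← Finset.sum_add_distrib]
  refine Finset.sum_congr rfl fun m hm => ?_
  have hm' : m ≤ t := by simpa [Nat.lt_succ_iff] using hm
  have e1 : max (m : ℤ) 0 = m := by simp
  have e2 : max (-(m : ℤ)) 0 = 0 := by simp
  simp only [PP, QQ, cnt, PowerSeries.coeff_mk, abs_neg, Nat.abs_cast, Nat.cast_sub hm', e1, e2]
  split_ifs <;> push_cast <;> ring

lemma main_poly : ∀ (n : ℕ) (V : Type u) [Fintype V] [DecidableEq V] (e : Fin n → V × V),
    ∃ H : Polynomial ℚ, cnt e * (1 - PowerSeries.X) ^ (Fintype.card V + n) = (H : PowerSeries ℚ) ∧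
      H.natDegree ≤ n ∧ H.coeff 0 = 1 ∧ 1 ≤ H.coeff n ∧
      ((∀ f, (e f).1 = (e f).2) → H = (1 + Polynomial.X) ^ n) ∧
      ((∃ f, (e f).1 ≠ (e f).2) → 1 < H.coeff n) := by
  intro n
  induction n with
  | zero =>
    intro V _ _ e
    refine ⟨1, ?_, by simp, by simp, by simp, by simp, ?_⟩
    · simpa using cnt_empty e
    · rintro ⟨f, _⟩; exact f.elim0
  | succ n ih =>
    intro V _ _ e
    obtain ⟨H1, a1, b1, c1, d1, l1, m1⟩ := ih V (fun f => e f.succ)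
    have hz : H1.coeff (n+1) = 0 := Polynomial.coeff_eq_zero_of_natDegree_lt (by omega)
    have hd : (1 + Polynomial.X : Polynomial ℚ).natDegree ≤ 1 := by
      compute_degree
    by_cases h : (e 0).1 = (e 0).2
    · refine ⟨(1 + Polynomial.X) * H1, ?_, ?_, ?_, ?_, ?_, ?_⟩
      · rw [cnt_loop e h]
        push_cast
        rw [← a1, ← PP_mul]
        ring
      · exact (Polynomial.natDegree_mul_le).trans (by omega)
      · simp [Polynomial.mul_coeff_zero, c1]
      · rw [add_mul, one_mul, Polynomial.coeff_add, Polynomial.coeff_X_mul, hz]; linarith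
      · intro hl
        rw [l1 (fun f => hl f.succ)]; ring
      · rintro ⟨f, hf⟩
        rw [add_mul, one_mul, Polynomial.coeff_add, Polynomial.coeff_X_mul, hz]
        have := m1 (by
          refine Fin.cases (fun h0 => absurd h h0) (fun g hg => ⟨g, hg⟩) f hf)
        linarith
    · obtain ⟨H2, a2, b2, c2, d2, l2, m2⟩ := ih _ (con (e 0) h (fun f : Fin n => e f.succ))
      have hcard : Fintype.card V = Fintype.card {v : V // v ≠ (e 0).2} + 1 := by
        have := Fintype.card_pos_iff.2 ⟨(e 0).1⟩
        rw [Fintype.card_subtype_compl]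
        simp; omega
      have htop : ((1 + Polynomial.X) * H1 + 2 * (Polynomial.X * H2)).coeff (n+1) =
          H1.coeff n + 2 * H2.coeff n := by
        rw [add_mul, one_mul, two_mul]
        simp only [Polynomial.coeff_add, Polynomial.coeff_X_mul, hz]; ring
      refine ⟨(1 + Polynomial.X) * H1 + 2 * (Polynomial.X * H2), ?_, ?_, ?_, ?_, ?_, ?_⟩
      · rw [cnt_nonloop e h]
        push_cast
        rw [← a1, ← a2, ← PP_mul]
        have : ((2 : Polynomial ℚ) : PowerSeries ℚ) = 2 := by
          have := Polynomial.coe_C (R := ℚ) 2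
          exact this
        rw [this, ← mul_assoc 2, ← QQ_mul, hcard]
        ring
      · refine Polynomial.natDegree_add_le_of_degree_le
          ((Polynomial.natDegree_mul_le).trans (by omega)) ?_
        rw [show (2 : Polynomial ℚ) * (Polynomial.X * H2) = Polynomial.C 2 * (Polynomial.X * H2)
          from rfl]
        refine (Polynomial.natDegree_C_mul_le _ _).trans ?_
        refine (Polynomial.natDegree_mul_le).trans ?_
        simp; omega
      · simp [Polynomial.mul_coeff_zero, c1]
      · rw [htop]; linarith
      · intro hl; exact absurd (hl 0) h
      · intro _; rw [htop]; linarith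

end Cosmo

namespace Cosmo
open Finset
set_option linter.unusedSectionVars false

section geom
variable {V E : Type*} [Fintype V] [Fintype E] [DecidableEq V] [DecidableEq E]

/-- real indicator of membership -/
noncomputable def rind (S : Finset V) (v : V) : ℝ := if v ∈ S then 1 else 0

lemma sum_single_inl (S : Finset V) (i : V) :
    ∑ v ∈ S, (Pi.single (Sum.inl i) 1 : (V ⊕ E) → ℝ) (Sum.inl v) = rind S i := by
  simp [Pi.single_apply, rind]

lemma poly_ineq (ends : E → Sym2 V) (S : Finset V) (w : E → ℝ)
    (hw : ∀ f i j, ends f = s(i, j) →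
      |rind S i - rind S j| ≤ w f ∧ w f ≤ rind S i + rind S j)
    (y : (V ⊕ E) → ℝ) (hy : y ∈ cosmoPolytope ends) :
    0 ≤ ∑ v ∈ S, y (Sum.inl v) + ∑ f, w f * y (Sum.inr f) := by
  let l : ((V ⊕ E) → ℝ) →ₗ[ℝ] ℝ := ∑ v ∈ S, LinearMap.proj (Sum.inl v) +
    ∑ f, w f • LinearMap.proj (Sum.inr f)
  have hl : ∀ y, l y = ∑ v ∈ S, y (Sum.inl v) + ∑ f, w f * y (Sum.inr f) := by
    intro y; simp [l]
  rw [← hl]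
  have hconv : Convex ℝ (l ⁻¹' Set.Ici 0) := (convex_Ici (0:ℝ)).linear_preimage l
  refine convexHull_min ?_ hconv hy
  have h1 : ∀ i, l (Pi.single (Sum.inl i) 1) = rind S i := fun i => by
    rw [hl, sum_single_inl]; simp [Pi.single_apply]
  have h2 : ∀ f, l (Pi.single (Sum.inr f) 1) = w f := fun f => by
    rw [hl]; simp [Pi.single_apply]
  rintro x ⟨f, i, j, hf, rfl | rfl | rfl⟩ <;>
    obtain ⟨ha, hb⟩ := hw f i j hf <;>
    rw [abs_le] at ha <;>
    simp only [Set.mem_preimage, Set.mem_Ici, map_add, map_sub, map_neg, h1, h2] <;> linarith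

lemma poly_sum (ends : E → Sym2 V) (y : (V ⊕ E) → ℝ) (hy : y ∈ cosmoPolytope ends) :
    ∑ v, y (Sum.inl v) + ∑ f, y (Sum.inr f) = 1 := by
  let l : ((V ⊕ E) → ℝ) →ₗ[ℝ] ℝ := ∑ v, LinearMap.proj (Sum.inl v) +
    ∑ f, LinearMap.proj (Sum.inr f)
  have hl : ∀ y, l y = ∑ v, y (Sum.inl v) + ∑ f, y (Sum.inr f) := by
    intro y; simp [l]
  rw [← hl]
  have hconv : Convex ℝ (l ⁻¹' {1}) := (convex_singleton (1:ℝ)).linear_preimage l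
  refine convexHull_min ?_ hconv hy
  have h1 : ∀ i, l (Pi.single (Sum.inl i) 1) = 1 := fun i => by
    rw [hl]; simp [Pi.single_apply]
  have h2 : ∀ f, l (Pi.single (Sum.inr f) 1) = 1 := fun f => by
    rw [hl]; simp [Pi.single_apply]
  rintro x ⟨f, i, j, hf, rfl | rfl | rfl⟩ <;>
    simp only [Set.mem_preimage, Set.mem_singleton_iff, map_add, map_sub, map_neg, h1, h2] <;>
    norm_num

lemma cone_add {W : Type*} [AddCommGroup W] [Module ℝ W] {P : Set W} (hP : Convex ℝ P)
    {s t : ℝ} (hs : 0 ≤ s) (ht : 0 ≤ t) {x y : W} (hx : x ∈ s • P) (hy : y ∈ t • P) :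
    x + y ∈ (s + t) • P := by
  rw [hP.add_smul hs ht]
  exact Set.add_mem_add hx hy

lemma cone_sum {W ι : Type*} [AddCommGroup W] [Module ℝ W] {P : Set W} (hP : Convex ℝ P)
    (hne : P.Nonempty) (T : Finset ι) (r : ι → ℝ) (y : ι → W) (hr : ∀ i, 0 ≤ r i)
    (hy : ∀ i, y i ∈ P) : ∑ i ∈ T, r i • y i ∈ (∑ i ∈ T, r i) • P := by
  classical
  induction T using Finset.induction_on with
  | empty => simp [Set.zero_smul_set hne]
  | insert i T hi ih =>
    rw [Finset.sum_insert hi, Finset.sum_insert hi]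
    exact cone_add hP (hr i) (Finset.sum_nonneg fun i _ => hr i)
      (Set.smul_mem_smul_set (hy i)) ih

/-- number of ends of `p` equal to `v` -/
def mlt (p : V × V) (v : V) : ℤ := (if v = p.1 then 1 else 0) + (if v = p.2 then 1 else 0)

lemma sum_mlt (p : V × V) (S : Finset V) :
    ∑ v ∈ S, mlt p v = (if p.1 ∈ S then 1 else 0) + (if p.2 ∈ S then 1 else 0) := by
  simp [mlt, Finset.sum_add_distrib]

/-- change of coordinates -/
def Tr (e : E → V × V) (x : (V ⊕ E) → ℤ) : (V → ℤ) × (E → ℤ) :=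
  (fun v => x (Sum.inl v) - ∑ f, max (-(x (Sum.inr f))) 0 * mlt (e f) v, fun f => x (Sum.inr f))

lemma Tr_bij (e : E → V × V) : Function.Bijective (Tr e) := by
  constructor
  · intro x y h
    simp only [Tr, Prod.mk.injEq] at h
    obtain ⟨h1, h2⟩ := h
    have h3 : ∀ f, x (Sum.inr f) = y (Sum.inr f) := fun f => congrFun h2 f
    funext k
    rcases k with v | f
    · have := congrFun h1 v
      simp only [h3] at this
      linarith
    · exact h3 f
  · rintro ⟨a, b⟩
    refine ⟨Sum.elim (fun v => a v + ∑ f, max (-(b f)) 0 * mlt (e f) v) b, ?_⟩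
    simp [Tr]

lemma sum_Tr (e : E → V × V) (x : (V ⊕ E) → ℤ) (S : Finset V) :
    ∑ v ∈ S, (Tr e x).1 v = ∑ v ∈ S, x (Sum.inl v) -
      ∑ f, max (-(x (Sum.inr f))) 0 * ((if (e f).1 ∈ S then 1 else 0) +
        (if (e f).2 ∈ S then 1 else 0)) := by
  simp only [Tr]
  rw [Finset.sum_sub_distrib, Finset.sum_comm]
  simp only [← Finset.mul_sum, sum_mlt]

lemma total_Tr (e : E → V × V) (x : (V ⊕ E) → ℤ) :
    ∑ v, (Tr e x).1 v + ∑ f, |(Tr e x).2 f| = ∑ v, x (Sum.inl v) + ∑ f, x (Sum.inr f) := by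
  rw [sum_Tr]
  have : ∑ f, x (Sum.inr f) = ∑ f, |x (Sum.inr f)| -
      ∑ f, max (-(x (Sum.inr f))) 0 * ((if (e f).1 ∈ (univ : Finset V) then 1 else 0) +
        (if (e f).2 ∈ (univ : Finset V) then 1 else 0)) := by
    rw [← Finset.sum_sub_distrib]
    refine Finset.sum_congr rfl fun f _ => ?_
    simp only [mem_univ, if_true]
    rcases le_total 0 (x (Sum.inr f)) with h | h
    · rw [abs_of_nonneg h, max_eq_right (by linarith)]; ring
    · rw [abs_of_nonpos h, max_eq_left (by linarith)]; ring
  rw [this]; simp only [Tr]; ring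

lemma mem_forward (ends : E → Sym2 V) (e : E → V × V) (he : ∀ f, ends f = s((e f).1, (e f).2))
    (x : (V ⊕ E) → ℤ) (t : ℕ) (hx : (fun k => (x k : ℝ)) ∈ (t : ℝ) • cosmoPolytope ends) :
    Tr e x ∈ X0 e t := by
  obtain ⟨y, hy, hyx⟩ := hx
  have hxy : ∀ k, (x k : ℝ) = t * y k := fun k => by
    have := congrFun hyx k
    simpa using this.symm
  refine ⟨fun S => ?_, ?_⟩
  · let w : E → ℤ := fun f => if x (Sum.inr f) ≤ 0 then
      ((if (e f).1 ∈ S then 1 else 0) + (if (e f).2 ∈ S then 1 else 0)) else ccut S (e f)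
    have h := poly_ineq ends S (fun f => (w f : ℝ)) (by
      intro f i j hf
      have hcases : (i = (e f).1 ∧ j = (e f).2) ∨ (i = (e f).2 ∧ j = (e f).1) := by
        rw [he f, Sym2.eq_iff] at hf
        rcases hf with ⟨h1, h2⟩ | ⟨h1, h2⟩
        · exact Or.inl ⟨h1.symm, h2.symm⟩
        · exact Or.inr ⟨h2.symm, h1.symm⟩
      rcases hcases with ⟨rfl, rfl⟩ | ⟨rfl, rfl⟩ <;> simp only [w, rind, ccut] <;>
        by_cases h1 : (e f).1 ∈ S <;> by_cases h2 : (e f).2 ∈ S <;> simp only [h1, h2] <;>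
        split_ifs <;> first | (exfalso; tauto) | norm_num) y hy
    have h2 : (0:ℝ) ≤ ((∑ v ∈ S, x (Sum.inl v) + ∑ f, w f * x (Sum.inr f) : ℤ) : ℝ) := by
      push_cast
      simp only [hxy]
      have : ∑ v ∈ S, (t:ℝ) * y (Sum.inl v) + ∑ f, (w f : ℝ) * (t * y (Sum.inr f)) =
        t * (∑ v ∈ S, y (Sum.inl v) + ∑ f, (w f : ℝ) * y (Sum.inr f)) := by
        rw [mul_add, Finset.mul_sum, Finset.mul_sum]
        congr 1
        exact Finset.sum_congr rfl fun f _ => by ring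
      rw [this]
      positivity
    have h3 : 0 ≤ ∑ v ∈ S, x (Sum.inl v) + ∑ f, w f * x (Sum.inr f) := by exact_mod_cast h2
    rw [sum_Tr]
    have h4 : ∑ f, w f * x (Sum.inr f) =
        ∑ f, max (x (Sum.inr f)) 0 * ccut S (e f) -
        ∑ f, max (-(x (Sum.inr f))) 0 * ((if (e f).1 ∈ S then 1 else 0) +
        (if (e f).2 ∈ S then 1 else 0)) := by
      rw [← Finset.sum_sub_distrib]
      refine Finset.sum_congr rfl fun f _ => ?_
      by_cases h0 : x (Sum.inr f) ≤ 0
      · simp only [w, h0, if_true]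
        rw [max_eq_right h0, max_eq_left (by linarith)]; ring
      · simp only [w, h0, if_false]
        rw [max_eq_left (by linarith), max_eq_right (by linarith)]; ring
    rw [h4] at h3
    simp only [Tr]
    linarith
  · rw [total_Tr]
    have h := poly_sum ends y hy
    have h2 : ((∑ v, x (Sum.inl v) + ∑ f, x (Sum.inr f) : ℤ) : ℝ) = t := by
      push_cast
      simp only [hxy]
      rw [← Finset.mul_sum, ← Finset.mul_sum, ← mul_add, h, mul_one]
    exact_mod_cast h2

lemma mem_backward [Nonempty V] (ends : E → Sym2 V) (hiso : ∀ v : V, ∃ f : E, v ∈ ends f)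
    (e : E → V × V) (he : ∀ f, ends f = s((e f).1, (e f).2))
    (x : (V ⊕ E) → ℤ) (t : ℕ) (hx : Tr e x ∈ X0 e t) :
    (fun k => (x k : ℝ)) ∈ (t : ℝ) • cosmoPolytope ends := by
  have hP : Convex ℝ (cosmoPolytope ends) := convex_convexHull ℝ _
  have hA : ∀ f, (Pi.single (Sum.inl (e f).1) 1 + Pi.single (Sum.inl (e f).2) 1 -
      Pi.single (Sum.inr f) 1 : (V ⊕ E) → ℝ) ∈ cosmoPolytope ends := fun f =>
    subset_convexHull ℝ _ ⟨f, _, _, he f, Or.inl rfl⟩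
  have hB : ∀ f, (Pi.single (Sum.inl (e f).1) 1 - Pi.single (Sum.inl (e f).2) 1 +
      Pi.single (Sum.inr f) 1 : (V ⊕ E) → ℝ) ∈ cosmoPolytope ends := fun f =>
    subset_convexHull ℝ _ ⟨f, _, _, he f, Or.inr (Or.inl rfl)⟩
  have hC : ∀ f, (-Pi.single (Sum.inl (e f).1) 1 + Pi.single (Sum.inl (e f).2) 1 +
      Pi.single (Sum.inr f) 1 : (V ⊕ E) → ℝ) ∈ cosmoPolytope ends := fun f =>
    subset_convexHull ℝ _ ⟨f, _, _, he f, Or.inr (Or.inr rfl)⟩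
  have hv : ∀ v, (Pi.single (Sum.inl v) 1 : (V ⊕ E) → ℝ) ∈ cosmoPolytope ends := by
    intro v
    obtain ⟨f, hf⟩ := hiso v
    obtain ⟨j, hj⟩ := hf
    have h1 : (Pi.single (Sum.inl v) 1 + Pi.single (Sum.inl j) 1 -
      Pi.single (Sum.inr f) 1 : (V ⊕ E) → ℝ) ∈ cosmoPolytope ends :=
      subset_convexHull ℝ _ ⟨f, _, _, hj, Or.inl rfl⟩
    have h2 : (Pi.single (Sum.inl v) 1 - Pi.single (Sum.inl j) 1 +
      Pi.single (Sum.inr f) 1 : (V ⊕ E) → ℝ) ∈ cosmoPolytope ends :=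
      subset_convexHull ℝ _ ⟨f, _, _, hj, Or.inr (Or.inl rfl)⟩
    have h3 := hP h1 h2 (show (0:ℝ) ≤ 1/2 by norm_num) (show (0:ℝ) ≤ 1/2 by norm_num)
      (by norm_num)
    convert h3 using 1
    module
  have hne : (cosmoPolytope ends).Nonempty := ⟨_, hv (Classical.arbitrary V)⟩
  obtain ⟨h1, h2⟩ := hx
  rw [total_Tr] at h2
  obtain ⟨g, hg, hg2⟩ := flow_lemma (fun f => max (x (Sum.inr f)) 0) (fun f => le_max_right _ _)
    e univ (Tr e x).1 h1
  let p : V → ℝ := fun v => (((Tr e x).1 v - ∑ f, g f * dvec (e f) v : ℤ) : ℝ)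
  let n : E → ℝ := fun f => ((max (-(x (Sum.inr f))) 0 : ℤ) : ℝ)
  let c : E → ℝ := fun f => ((max (x (Sum.inr f)) 0 : ℤ) : ℝ)
  have hp : ∀ v, 0 ≤ p v := fun v => by
    simp only [p]; exact_mod_cast hg2 v
  have hn : ∀ f, 0 ≤ n f := fun f => by
    simp only [n]; exact_mod_cast (le_max_right (-(x (Sum.inr f))) 0)
  have hgc : ∀ f, |(g f : ℝ)| ≤ c f := fun f => by
    simp only [c]; exact_mod_cast hg f
  have hα : ∀ f, 0 ≤ (c f + g f) / 2 := fun f => by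
    have := (abs_le.1 (hgc f)).1; linarith
  have hβ : ∀ f, 0 ≤ (c f - g f) / 2 := fun f => by
    have := (abs_le.1 (hgc f)).2; linarith
  have hcn : ∀ f, (x (Sum.inr f) : ℝ) = c f - n f := fun f => by
    have : x (Sum.inr f) = max (x (Sum.inr f)) 0 - max (-(x (Sum.inr f))) 0 := by omega
    simp only [c, n]; exact_mod_cast this
  have m1 := cone_sum hP hne univ p _ hp hv
  have m2 := cone_sum hP hne univ n _ hn hA
  have m3 := cone_sum hP hne univ _ _ hα hB
  have m4 := cone_sum hP hne univ _ _ hβ hC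
  have m := cone_add hP (add_nonneg (add_nonneg (Finset.sum_nonneg fun i _ => hp i)
    (Finset.sum_nonneg fun i _ => hn i)) (Finset.sum_nonneg fun i _ => hα i))
    (Finset.sum_nonneg fun i _ => hβ i)
    (cone_add hP (add_nonneg (Finset.sum_nonneg fun i _ => hp i)
    (Finset.sum_nonneg fun i _ => hn i)) (Finset.sum_nonneg fun i _ => hα i)
    (cone_add hP (Finset.sum_nonneg fun i _ => hp i) (Finset.sum_nonneg fun i _ => hn i) m1 m2)
    m3) m4
  have hvec : ∀ v, (x (Sum.inl v) : ℝ) = p v + ∑ f, (n f * (mlt (e f) v : ℝ) +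
      g f * (dvec (e f) v : ℝ)) := by
    intro v
    simp only [p, n, Tr]
    push_cast
    rw [Finset.sum_add_distrib]
    ring
  convert m using 1
  · -- scalars
    congr 1
    have e1 : ∑ v, p v = ∑ v, (x (Sum.inl v) : ℝ) - ∑ f, 2 * n f := by
      have : ∀ v, p v = (x (Sum.inl v) : ℝ) - ∑ f, (n f * (mlt (e f) v : ℝ) +
        g f * (dvec (e f) v : ℝ)) := fun v => by rw [hvec v]; ring
      simp only [this]
      rw [Finset.sum_sub_distrib, Finset.sum_comm]
      congr 1
      refine Finset.sum_congr rfl fun f _ => ?_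
      rw [Finset.sum_add_distrib, ← Finset.mul_sum, ← Finset.mul_sum]
      have q1 : ∑ v, (mlt (e f) v : ℝ) = 2 := by
        have := sum_mlt (e f) univ
        simp only [mem_univ, if_true] at this
        have h' : ((∑ v, mlt (e f) v : ℤ) : ℝ) = 2 := by rw [this]; norm_num
        exact_mod_cast h'
      have q2 : ∑ v, (dvec (e f) v : ℝ) = 0 := by
        have := sum_dvec (e f) univ
        simp only [mem_univ, if_true] at this
        have h' : ((∑ v, dvec (e f) v : ℤ) : ℝ) = 0 := by rw [this]; norm_num
        exact_mod_cast h'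
      rw [q1, q2]; ring
    have e2 : (t : ℝ) = ∑ v, (x (Sum.inl v) : ℝ) + ∑ f, (x (Sum.inr f) : ℝ) := by
      exact_mod_cast h2.symm
    rw [e1, e2, add_assoc, add_assoc, sub_add, sub_eq_add_neg]
    congr 1
    rw [← Finset.sum_add_distrib, ← Finset.sum_add_distrib, ← Finset.sum_sub_distrib,
      ← Finset.sum_neg_distrib]
    refine Finset.sum_congr rfl fun f _ => ?_
    rw [hcn f]; ring
  · funext k
    rcases k with v | f
    · simp only [hvec v, Pi.add_apply, Finset.sum_apply, Pi.smul_apply, Pi.sub_apply,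
        Pi.neg_apply, smul_eq_mul]
      have e1 : ∑ u, p u * (Pi.single (Sum.inl u) 1 : (V ⊕ E) → ℝ) (Sum.inl v) = p v := by
        simp [Pi.single_apply]
      rw [e1, add_assoc, add_assoc]
      congr 1
      rw [← Finset.sum_add_distrib, ← Finset.sum_add_distrib]
      refine Finset.sum_congr rfl fun f _ => ?_
      simp only [Pi.single_apply, mlt, dvec, Sum.inl.injEq, reduceCtorEq, if_false]
      push_cast
      ring
    · simp only [hcn f, Pi.add_apply, Finset.sum_apply, Pi.smul_apply, Pi.sub_apply,
        Pi.neg_apply, smul_eq_mul]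
      simp only [Pi.single_apply, Sum.inr.injEq, reduceCtorEq, if_false, mul_zero, sum_const_zero,
        zero_add, sub_zero, neg_zero, add_zero, zero_sub, mul_neg, mul_ite, mul_one,
        Finset.sum_neg_distrib, Finset.sum_ite_eq, mem_univ, if_true]
      ring

lemma count_eq [Nonempty V] (ends : E → Sym2 V) (hiso : ∀ v : V, ∃ f : E, v ∈ ends f)
    (e : E → V × V) (he : ∀ f, ends f = s((e f).1, (e f).2)) (t : ℕ) :
    latticePointCount (cosmoPolytope ends) t = (X0 e t).ncard := by
  have hset : {x : (V ⊕ E) → ℤ | (fun k => (x k : ℝ)) ∈ (t : ℝ) • cosmoPolytope ends} =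
      Tr e ⁻¹' (X0 e t) := by
    ext x
    exact ⟨mem_forward ends e he x t, mem_backward ends hiso e he x t⟩
  rw [latticePointCount, hset]
  exact Set.ncard_preimage_of_injective_subset_range (Tr_bij e).1
    (by rw [(Tr_bij e).2.range_eq]; exact Set.subset_univ _)

lemma X0_reindex {n : ℕ} (σ : Fin n ≃ E) (e : E → V × V) (t : ℤ) :
    (X0 (fun f => e (σ f)) t).ncard = (X0 e t).ncard := by
  have hbij : Function.Bijective (fun q : (V → ℤ) × (E → ℤ) => (q.1, fun f => q.2 (σ f))) := by
    constructor
    · rintro ⟨a, b⟩ ⟨a', b'⟩ h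
      simp only [Prod.mk.injEq] at h
      obtain ⟨rfl, h⟩ := h
      congr 1
      funext f
      have := congrFun h (σ.symm f)
      simpa using this
    · rintro ⟨a, b⟩
      exact ⟨(a, fun f => b (σ.symm f)), by simp⟩
  have hset : X0 e t = (fun q : (V → ℤ) × (E → ℤ) => (q.1, fun f => q.2 (σ f))) ⁻¹'
      (X0 (fun f => e (σ f)) t) := by
    ext ⟨a, b⟩
    simp only [X0, Set.mem_preimage, Set.mem_ofPred_eq]
    rw [Equiv.sum_comp σ (fun f => |b f|)]
    refine and_congr (forall_congr' fun S => ?_) Iff.rfl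
    rw [Equiv.sum_comp σ (fun f => max (b f) 0 * ccut S (e f))]
  rw [hset]
  exact (Set.ncard_preimage_of_injective_subset_range hbij.1
    (by rw [hbij.2.range_eq]; exact Set.subset_univ _)).symm

end geom

end Cosmo

/-- The `h*`-polynomial of `C_G` is palindromic, i.e.
`h*_i(C_G) = h*_{|E|−i}(C_G)` for all `0 ≤ i ≤ |E|` (equivalently, `C_G` is Gorenstein),
if and only if every edge of `G` is a loop. -/
theorem hstar_palindromic_iff_all_loops
    {V E : Type*} [Fintype V] [Fintype E] [DecidableEq V] [DecidableEq E]
    (ends : E → Sym2 V) (hiso : ∀ v : V, ∃ f : E, v ∈ ends f)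
    (h : Polynomial ℚ)
    (hh : IsHStarPoly (cosmoPolytope ends) (Fintype.card V + Fintype.card E - 1) h) :
    (∀ i ≤ Fintype.card E, h.coeff i = h.coeff (Fintype.card E - i)) ↔
      ∀ f : E, (ends f).IsDiag := by
  rcases isEmpty_or_nonempty V with hV | hV
  · have hE : IsEmpty E := ⟨fun f => hV.elim ((ends f).out.1)⟩
    simp
  have hex : ∀ f, ∃ q : V × V, ends f = s(q.1, q.2) := fun f => by
    induction hq : ends f using Sym2.ind with
    | _ x y => exact ⟨(x, y), rfl⟩
  choose e he using hex
  let σ : Fin (Fintype.card E) ≃ E := (Fintype.equivFin E).symm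
  obtain ⟨H, h1, h2, h3, h4, h5, h6⟩ := Cosmo.main_poly (Fintype.card E) V (fun f => e (σ f))
  have hV1 : 1 ≤ Fintype.card V := Fintype.card_pos
  have hcoe : PowerSeries.coeff 0 (Cosmo.cnt (fun f => e (σ f))) = 1 := by
    have := congrArg (PowerSeries.coeff 0) h1
    simpa [h3] using this
  have hehr : ehrhartSeries (cosmoPolytope ends) = Cosmo.cnt (fun f => e (σ f)) := by
    ext t
    by_cases ht : t = 0
    · subst ht
      rw [hcoe]; simp [ehrhartSeries]
    · simp only [ehrhartSeries, Cosmo.cnt, PowerSeries.coeff_mk, ht, if_false]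
      rw [Cosmo.count_eq ends hiso e he, Cosmo.X0_reindex]
  have hH : h = H := by
    rw [IsHStarPoly, hehr, Nat.sub_add_cancel (by omega), h1] at hh
    exact (Polynomial.coe_injective ℚ hh).symm
  have hdiag : ∀ f, (ends f).IsDiag ↔ (e f).1 = (e f).2 := fun f => by
    rw [he f]; exact Sym2.mk_isDiag_iff
  simp only [hdiag]
  subst hH
  constructor
  · intro hp
    by_contra hcon
    push Not at hcon
    obtain ⟨f, hf⟩ := hcon
    have := h6 ⟨σ.symm f, by simpa using hf⟩
    have h0 := hp 0 (Nat.zero_le _)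
    rw [h3, Nat.sub_zero] at h0
    linarith
  · intro hl i hi
    rw [h5 (fun f => hl (σ f)), Polynomial.coeff_one_add_X_pow, Polynomial.coeff_one_add_X_pow,
      Nat.choose_symm hi]
end

section
/- Let n ≥ 3 and let a = (a_1, …, a_n) ∈ ℤ^n with a_i ≥ 1 for all i. Then the h*-polynomial of the cosmological polytope of the multicycle C_a is h*(C_{C_a}; z) = ∏_{i=1}^n ((1+z)^{a_i} + 2 a_i z (1+z)^{a_i−1}) − ∏_{i=1}^n 2 a_i z (1+z)^{a_i−1}. -/
open Polynomial Pointwise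

/-- The endpoint map of the multicycle `C_a` on vertex set `ZMod n`: for each vertex `i`
there are `a i` parallel edges between `i` and `i + 1`. -/
def multicycleEnds (n : ℕ) (a : ZMod n → ℕ) : (Σ i : ZMod n, Fin (a i)) → Sym2 (ZMod n) :=
  fun p => s(p.1, p.1 + 1)


/-! ### A small theory of weighted generating functions -/

/-- `g` is the generating function of `A`, graded by `w` (with finite fibres) and weighted by `c`. -/
def IsGF {A : Type*} (w : A → ℕ) (c : A → ℚ) (g : PowerSeries ℚ) : Prop :=
  ∃ F : ℕ → Finset A, (∀ t x, x ∈ F t ↔ w x = t) ∧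
    ∀ t, PowerSeries.coeff t g = ∑ x ∈ F t, c x

theorem IsGF.add {A : Type*} {w : A → ℕ} {c c' : A → ℚ} {g g' : PowerSeries ℚ}
    (h : IsGF w c g) (h' : IsGF w c' g') : IsGF w (fun x => c x + c' x) (g + g') := by
  obtain ⟨F, hF, hc⟩ := h
  obtain ⟨F', hF', hc'⟩ := h'
  have : F' = F := by
    funext t; ext x; rw [hF, hF']
  subst this
  exact ⟨F', hF, fun t => by simp [hc, hc', Finset.sum_add_distrib]⟩

theorem IsGF.sum {A ι : Type*} {w : A → ℕ} (s : Finset ι) {c : ι → A → ℚ}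
    {g : ι → PowerSeries ℚ} (F : ℕ → Finset A) (hF : ∀ t x, x ∈ F t ↔ w x = t)
    (h : ∀ i ∈ s, IsGF w (c i) (g i)) :
    IsGF w (fun x => ∑ i ∈ s, c i x) (∑ i ∈ s, g i) := by
  refine ⟨F, hF, fun t => ?_⟩
  rw [map_sum, Finset.sum_comm]
  refine Finset.sum_congr rfl fun i hi => ?_
  obtain ⟨F', hF', hc'⟩ := h i hi
  have : F' = F := by
    funext t; ext x; rw [hF, hF']
  rw [hc', this]

theorem IsGF.congr {A : Type*} {w w' : A → ℕ} {c c' : A → ℚ} {g g' : PowerSeries ℚ}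
    (h : IsGF w c g) (hw : ∀ x, w x = w' x) (hc : ∀ x, c x = c' x) (hg : g = g') :
    IsGF w' c' g' := by
  obtain rfl : w = w' := funext hw
  obtain rfl : c = c' := funext hc
  exact hg ▸ h

theorem IsGF.pi {ι : Type*} [Fintype ι] [DecidableEq ι] {A : ι → Type*}
    {w : ∀ i, A i → ℕ} {c : ∀ i, A i → ℚ} {g : ι → PowerSeries ℚ}
    (h : ∀ i, IsGF (w i) (c i) (g i)) :
    IsGF (fun x : ∀ i, A i => ∑ i, w i (x i)) (fun x => ∏ i, c i (x i)) (∏ i, g i) := by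
  classical
  choose F hF hc using h
  refine ⟨fun t => (Finset.finsuppAntidiag Finset.univ t).biUnion
    fun l => Fintype.piFinset fun i => F i (l i), ?_, ?_⟩
  · intro t x
    simp only [Finset.mem_biUnion, Fintype.mem_piFinset, hF, Finset.mem_finsuppAntidiag]
    constructor
    · rintro ⟨l, ⟨hl, -⟩, h⟩
      rw [← hl]; exact Finset.sum_congr rfl fun i _ => h i
    · intro h
      refine ⟨Finsupp.equivFunOnFinite.symm fun i => w i (x i), ⟨?_, Finset.subset_univ _⟩, ?_⟩
      · simpa using h
      · intro i; simp
  · intro t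
    rw [PowerSeries.coeff_prod, Finset.sum_biUnion]
    · refine Finset.sum_congr rfl fun l _ => ?_
      simp only [hc]
      rw [Finset.prod_univ_sum]
    · intro l _ l' _ hne
      rw [Function.onFun, Finset.disjoint_left]
      intro x hx hx'
      apply hne
      ext i
      rw [Fintype.mem_piFinset] at hx hx'
      rw [← (hF _ _ _).1 (hx i), ← (hF _ _ _).1 (hx' i)]

theorem IsGF.prod {A B : Type*} {w : A → ℕ} {c : A → ℚ} {g : PowerSeries ℚ}
    {w' : B → ℕ} {c' : B → ℚ} {g' : PowerSeries ℚ}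
    (h : IsGF w c g) (h' : IsGF w' c' g') :
    IsGF (fun x : A × B => w x.1 + w' x.2) (fun x => c x.1 * c' x.2) (g * g') := by
  classical
  obtain ⟨F, hF, hc⟩ := h
  obtain ⟨F', hF', hc'⟩ := h'
  refine ⟨fun t => (Finset.HasAntidiagonal.antidiagonal t).biUnion fun l => F l.1 ×ˢ F' l.2, ?_, ?_⟩
  · intro t x
    simp only [Finset.mem_biUnion, Finset.mem_product, hF, hF', Finset.HasAntidiagonal.mem_antidiagonal]
    constructor
    · rintro ⟨l, hl, h1, h2⟩
      omega
    · intro h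
      exact ⟨(w x.1, w' x.2), h, rfl, rfl⟩
  · intro t
    rw [PowerSeries.coeff_mul, Finset.sum_biUnion]
    · refine Finset.sum_congr rfl fun l _ => ?_
      rw [hc, hc', Finset.sum_mul_sum, Finset.sum_product]
    · intro l _ l' _ hne
      rw [Function.onFun, Finset.disjoint_left]
      intro x hx hx'
      apply hne
      simp only [Finset.mem_product, hF, hF'] at hx hx'
      ext
      · omega
      · omega

/-- The geometric series. -/
noncomputable def geo : PowerSeries ℚ := PowerSeries.mk 1

theorem geo_mul : geo * (1 - PowerSeries.X) = 1 := PowerSeries.mk_one_mul_one_sub_eq_one ℚ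

theorem coeff_geo (t : ℕ) : PowerSeries.coeff t geo = 1 := by simp [geo]

theorem isGF_nat : IsGF (fun e : ℕ => e) (fun _ => 1) geo :=
  ⟨fun t => {t}, by simp, by simp [coeff_geo]⟩

theorem isGF_nat_zero : IsGF (fun e : ℕ => e) (fun e => if e = 0 then 1 else 0) 1 :=
  ⟨fun t => {t}, by simp, by simp [PowerSeries.coeff_one, eq_comm]⟩

/-- Integers of given absolute value. -/
def absFib (t : ℕ) : Finset ℤ := {(t : ℤ), -(t : ℤ)}

theorem mem_absFib (t : ℕ) (x : ℤ) : x ∈ absFib t ↔ x.natAbs = t := by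
  simp only [absFib, Finset.mem_insert, Finset.mem_singleton]; omega

theorem isGF_int : IsGF Int.natAbs (fun _ => 1) ((1 + PowerSeries.X) * geo) := by
  refine ⟨absFib, mem_absFib, ?_⟩
  rintro (_ | t)
  · have := coeff_geo 0
    simp only [PowerSeries.coeff_zero_eq_constantCoeff] at this
    simp [absFib, this, add_mul]
  · rw [add_mul, one_mul, map_add, PowerSeries.coeff_succ_X_mul, coeff_geo, coeff_geo, absFib,
      Finset.sum_pair (by omega)]

theorem isGF_int_pos : IsGF Int.natAbs (fun y => ((2 * max y 0 : ℤ) : ℚ))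
    (2 * PowerSeries.X * geo ^ 2) := by
  refine ⟨absFib, mem_absFib, ?_⟩
  have e : (2 * PowerSeries.X * geo ^ 2 : PowerSeries ℚ) = PowerSeries.X * (geo * geo)
      + PowerSeries.X * (geo * geo) := by ring
  rintro (_ | t)
  · rw [e]; simp [absFib]
  · rw [e, map_add, PowerSeries.coeff_succ_X_mul, PowerSeries.coeff_mul, absFib,
      Finset.sum_pair (by omega)]
    simp only [coeff_geo]
    rw [max_eq_left (by omega), max_eq_right (by omega)]
    simp; ring

theorem isGF_class_one (m : ℕ) : IsGF (fun y : Fin m → ℤ => ∑ j, (y j).natAbs) (fun _ => 1)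
    (((1 + PowerSeries.X) * geo) ^ m) := by
  refine (IsGF.pi (ι := Fin m) (fun _ => isGF_int)).congr (fun _ => rfl) (by simp) (by simp)

theorem isGF_class_pos (m : ℕ) : IsGF (fun y : Fin m → ℤ => ∑ j, (y j).natAbs)
    (fun y => ((∑ j, 2 * max (y j) 0 : ℤ) : ℚ))
    ((m : PowerSeries ℚ) * (2 * PowerSeries.X * geo ^ 2) * ((1 + PowerSeries.X) * geo) ^ (m - 1)) := by
  obtain ⟨F, hF, -⟩ := isGF_class_one m
  refine (IsGF.sum Finset.univ (c := fun k (y : Fin m → ℤ) => ((2 * max (y k) 0 : ℤ) : ℚ))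
    (g := fun _ => (2 * PowerSeries.X * geo ^ 2) * ((1 + PowerSeries.X) * geo) ^ (m - 1))
    F hF ?_).congr (fun _ => rfl) ?_ ?_
  · intro k _
    refine (IsGF.pi (ι := Fin m) (A := fun _ => ℤ) (w := fun _ => Int.natAbs)
      (c := fun j y => if j = k then ((2 * max y 0 : ℤ) : ℚ) else 1)
      (g := fun j => if j = k then (2 * PowerSeries.X * geo ^ 2) else
        ((1 + PowerSeries.X) * geo)) ?_).congr (fun _ => rfl) ?_ ?_
    · intro j
      by_cases h : j = k
      · simp only [h, if_true]; exact isGF_int_pos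
      · simp only [h, if_false]; exact isGF_int
    · intro y; rw [Finset.prod_ite_eq' Finset.univ k (fun j => ((2 * max (y j) 0 : ℤ) : ℚ))]
      simp
    · rw [← Finset.mul_prod_erase Finset.univ _ (Finset.mem_univ k), if_pos rfl]
      congr 1
      rw [Finset.prod_congr rfl (g := fun _ => (1 + PowerSeries.X) * geo)
        (fun j hj => if_neg (Finset.ne_of_mem_erase hj))]
      simp
  · intro y; push_cast; rfl
  · simp; ring

/-- Upper demand of one class of parallel edges. -/
def dem {m : ℕ} (y : Fin m → ℤ) : ℤ := ∑ j, 2 * max (y j) 0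

theorem dem_nonneg {m : ℕ} (y : Fin m → ℤ) : 0 ≤ dem y :=
  Finset.sum_nonneg fun j _ => by positivity

/-- weight of one class. -/
def wt {m : ℕ} (q : (Fin m → ℤ) × ℕ) : ℕ := (∑ j, (q.1 j).natAbs) + q.2

theorem isGF_N (m : ℕ) : IsGF (wt (m := m)) (fun q => (dem q.1 : ℚ) * if q.2 = 0 then 1 else 0)
    ((m : PowerSeries ℚ) * (2 * PowerSeries.X * geo ^ 2) * ((1 + PowerSeries.X) * geo) ^ (m - 1)) :=
  ((isGF_class_pos m).prod isGF_nat_zero).congr (fun _ => rfl) (fun _ => rfl) (mul_one _)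

theorem isGF_T (m : ℕ) : IsGF (wt (m := m))
    (fun q => 1 + (dem q.1 : ℚ) * if q.2 = 0 then 1 else 0)
    (((1 + PowerSeries.X) * geo) ^ m * geo +
      (m : PowerSeries ℚ) * (2 * PowerSeries.X * geo ^ 2) * ((1 + PowerSeries.X) * geo) ^ (m - 1)) :=
  (((isGF_class_one m).prod isGF_nat).add (isGF_N m)).congr (fun _ => rfl)
    (fun _ => by simp) rfl


/-! ### Description of the cone -/

section cone
variable {n : ℕ} {a : ZMod n → ℕ} {R : Type*} [Ring R] [LinearOrder R]

/-- Demand of the class `i`. -/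
def DD (p : (ZMod n ⊕ (Σ i : ZMod n, Fin (a i))) → R) (i : ZMod n) : R :=
  ∑ j, 2 * max (p (Sum.inr ⟨i, j⟩)) 0

/-- Supply of the vertex `i`. -/
def XX (p : (ZMod n ⊕ (Σ i : ZMod n, Fin (a i))) → R) (i : ZMod n) : R :=
  p (Sum.inl i) + ∑ j, p (Sum.inr ⟨i, j⟩) + ∑ j, p (Sum.inr ⟨i - 1, j⟩)

/-- `b` is a feasible routing for `p`. -/
def FeasB (p : (ZMod n ⊕ (Σ i : ZMod n, Fin (a i))) → R) (b : ZMod n → R) : Prop :=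
  (∀ i, 0 ≤ b i ∧ b i ≤ DD p i) ∧ ∀ i, b i + (DD p (i - 1) - b (i - 1)) ≤ XX p i

end cone

/-- Membership in the cone. -/
def coneSet (n : ℕ) (a : ZMod n → ℕ) : Set ((ZMod n ⊕ (Σ i : ZMod n, Fin (a i))) → ℝ) :=
  {p | ∃ b c : ZMod n → ℝ, (∀ i, 0 ≤ b i) ∧ (∀ i, 0 ≤ c i) ∧ (∀ i, DD p i ≤ b i + c i) ∧
    ∀ i, b i + c (i - 1) ≤ XX p i}

theorem XX_comb {n : ℕ} {a : ZMod n → ℕ} (p q : (ZMod n ⊕ (Σ i : ZMod n, Fin (a i))) → ℝ)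
    (s r : ℝ) (i : ZMod n) : XX (s • p + r • q) i = s * XX p i + r * XX q i := by
  simp only [XX, Pi.add_apply, Pi.smul_apply, smul_eq_mul, Finset.sum_add_distrib,
    ← Finset.mul_sum]
  ring

theorem DD_comb {n : ℕ} {a : ZMod n → ℕ} (p q : (ZMod n ⊕ (Σ i : ZMod n, Fin (a i))) → ℝ)
    {s r : ℝ} (hs : 0 ≤ s) (hr : 0 ≤ r) (i : ZMod n) :
    DD (s • p + r • q) i ≤ s * DD p i + r * DD q i := by
  simp only [DD, Finset.mul_sum]
  rw [← Finset.sum_add_distrib]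
  refine Finset.sum_le_sum fun j _ => ?_
  simp only [Pi.add_apply, Pi.smul_apply, smul_eq_mul]
  have h1 := mul_le_mul_of_nonneg_left (le_max_left (p (Sum.inr ⟨i, j⟩)) 0) hs
  have h2 := mul_le_mul_of_nonneg_left (le_max_left (q (Sum.inr ⟨i, j⟩)) 0) hr
  have h3 := mul_nonneg hs (le_max_right (p (Sum.inr ⟨i, j⟩)) 0)
  have h4 := mul_nonneg hr (le_max_right (q (Sum.inr ⟨i, j⟩)) 0)
  have : max (s * p (Sum.inr ⟨i, j⟩) + r * q (Sum.inr ⟨i, j⟩)) 0 ≤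
      s * max (p (Sum.inr ⟨i, j⟩)) 0 + r * max (q (Sum.inr ⟨i, j⟩)) 0 :=
    max_le (by linarith) (by linarith)
  linarith

theorem coneSet_comb {n : ℕ} {a : ZMod n → ℕ} {p q : (ZMod n ⊕ (Σ i : ZMod n, Fin (a i))) → ℝ}
    (hp : p ∈ coneSet n a) (hq : q ∈ coneSet n a) {s r : ℝ} (hs : 0 ≤ s) (hr : 0 ≤ r) :
    s • p + r • q ∈ coneSet n a := by
  obtain ⟨b, c, hb, hc, hD, hX⟩ := hp
  obtain ⟨b', c', hb', hc', hD', hX'⟩ := hq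
  refine ⟨fun i => s * b i + r * b' i, fun i => s * c i + r * c' i, ?_, ?_, ?_, ?_⟩
  · intro i; have := mul_nonneg hs (hb i); have := mul_nonneg hr (hb' i); positivity
  · intro i; have := mul_nonneg hs (hc i); have := mul_nonneg hr (hc' i); positivity
  · intro i
    have h1 := mul_le_mul_of_nonneg_left (hD i) hs
    have h2 := mul_le_mul_of_nonneg_left (hD' i) hr
    have := DD_comb p q hs hr i
    linarith
  · intro i
    have h1 := mul_le_mul_of_nonneg_left (hX i) hs
    have h2 := mul_le_mul_of_nonneg_left (hX' i) hr
    rw [XX_comb]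
    linarith

theorem sum_single_inr {n : ℕ} {a : ZMod n → ℕ} (k : ZMod n) (j0 : Fin (a k)) (i : ZMod n) :
    ∑ j, (Pi.single (Sum.inr ⟨k, j0⟩) (1 : ℝ) : (ZMod n ⊕ (Σ i : ZMod n, Fin (a i))) → ℝ)
      (Sum.inr ⟨i, j⟩) = if i = k then 1 else 0 := by
  split_ifs with h
  · subst h
    rw [Finset.sum_eq_single j0]
    · simp
    · intro j _ hj; simp [hj]
    · simp
  · refine Finset.sum_eq_zero fun j _ => ?_
    rw [Pi.single_apply, if_neg]
    intro h'
    simp only [Sum.inr.injEq, Sigma.mk.injEq] at h'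
    exact h h'.1

theorem vertex_cases {n : ℕ} {a : ZMod n → ℕ} {x : (ZMod n ⊕ (Σ i : ZMod n, Fin (a i))) → ℝ}
    (hx : x ∈ cosmoVertices (multicycleEnds n a)) :
    ∃ (k : ZMod n) (j : Fin (a k)),
      x = Pi.single (Sum.inl k) 1 + Pi.single (Sum.inl (k + 1)) 1 - Pi.single (Sum.inr ⟨k, j⟩) 1 ∨
      x = Pi.single (Sum.inl k) 1 - Pi.single (Sum.inl (k + 1)) 1 + Pi.single (Sum.inr ⟨k, j⟩) 1 ∨
      x = -Pi.single (Sum.inl k) 1 + Pi.single (Sum.inl (k + 1)) 1 +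
        Pi.single (Sum.inr ⟨k, j⟩) 1 := by
  obtain ⟨⟨k, j⟩, u, v, he, h⟩ := hx
  refine ⟨k, j, ?_⟩
  simp only [multicycleEnds, Sym2.eq_iff] at he
  rcases he with ⟨rfl, rfl⟩ | ⟨rfl, rfl⟩
  · exact h
  · rcases h with h | h | h
    · left; rw [h]; abel
    · right; right; rw [h]; abel
    · right; left; rw [h]; abel

theorem vertex_mem_cone {n : ℕ} {a : ZMod n → ℕ}
    {x : (ZMod n ⊕ (Σ i : ZMod n, Fin (a i))) → ℝ}
    (hx : x ∈ cosmoVertices (multicycleEnds n a)) : x ∈ coneSet n a := by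
  have key : ∀ i k : ZMod n, (i - 1 = k) = (i = k + 1) := fun i k => by
    rw [sub_eq_iff_eq_add]
  obtain ⟨k, j, h⟩ := vertex_cases hx
  have hD : ∀ y : ZMod n → ℝ, ∀ i, ∑ j', 2 * max (0 +
      (Pi.single (Sum.inr ⟨k, j⟩) (1 : ℝ) : (ZMod n ⊕ (Σ i : ZMod n, Fin (a i))) → ℝ)
      (Sum.inr ⟨i, j'⟩)) 0 = if i = k then 2 else 0 := by
    intro y i
    have := sum_single_inr (a := a) k j i
    calc _ = ∑ j', 2 * (Pi.single (Sum.inr ⟨k, j⟩) (1 : ℝ) :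
          (ZMod n ⊕ (Σ i : ZMod n, Fin (a i))) → ℝ) (Sum.inr ⟨i, j'⟩) := by
          refine Finset.sum_congr rfl fun j' _ => ?_
          rw [zero_add, max_eq_left]
          rw [Pi.single_apply]; split_ifs <;> norm_num
      _ = _ := by rw [← Finset.mul_sum, this]; split_ifs <;> norm_num
  rcases h with h | h | h
  · refine ⟨fun _ => 0, fun _ => 0, fun _ => le_rfl, fun _ => le_rfl, ?_, ?_⟩
    · intro i
      rw [add_zero, DD]
      refine Finset.sum_nonpos fun j' _ => ?_
      rw [max_eq_right, mul_zero]
      rw [h]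
      simp only [Pi.add_apply, Pi.sub_apply, ne_eq, reduceCtorEq, not_false_eq_true,
        Pi.single_eq_of_ne, Pi.single_apply]
      split_ifs <;> norm_num
    · intro i
      rw [XX, h]
      simp only [Pi.add_apply, Pi.sub_apply, Finset.sum_sub_distrib, Finset.sum_add_distrib,
        sum_single_inr, key, ne_eq, reduceCtorEq, not_false_eq_true, Pi.single_eq_of_ne,
        Finset.sum_const_zero]
      simp only [Pi.single_apply, Sum.inl.injEq]
      split_ifs <;> norm_num
  · refine ⟨fun i => if i = k then 2 else 0, fun _ => 0, ?_, fun _ => le_rfl, ?_, ?_⟩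
    · intro i; dsimp only; split_ifs <;> norm_num
    · intro i
      rw [DD, h]
      simp only [Pi.add_apply, Pi.sub_apply, ne_eq, reduceCtorEq, not_false_eq_true,
        Pi.single_eq_of_ne, sub_self]
      rw [hD 0, add_zero]
    · intro i
      rw [XX, h]
      simp only [Pi.add_apply, Pi.sub_apply, Finset.sum_sub_distrib, Finset.sum_add_distrib,
        sum_single_inr, key, ne_eq, reduceCtorEq, not_false_eq_true, Pi.single_eq_of_ne,
        Finset.sum_const_zero]
      simp only [Pi.single_apply, Sum.inl.injEq]
      split_ifs <;> norm_num
  · refine ⟨fun _ => 0, fun i => if i = k then 2 else 0, fun _ => le_rfl, ?_, ?_, ?_⟩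
    · intro i; dsimp only; split_ifs <;> norm_num
    · intro i
      rw [DD, h]
      simp only [Pi.add_apply, Pi.neg_apply, ne_eq, reduceCtorEq, not_false_eq_true,
        Pi.single_eq_of_ne, neg_zero, add_zero]
      rw [hD 0, zero_add]
    · intro i
      rw [XX, h]
      simp only [Pi.add_apply, Pi.neg_apply, Finset.sum_neg_distrib, Finset.sum_add_distrib,
        sum_single_inr, key, ne_eq, reduceCtorEq, not_false_eq_true, Pi.single_eq_of_ne,
        Finset.sum_const_zero]
      simp only [Pi.single_apply, Sum.inl.injEq]
      split_ifs <;> norm_num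

theorem mem_dilate_imp {n : ℕ} [NeZero n] {a : ZMod n → ℕ} {t : ℝ} (ht : 0 ≤ t)
    {p : (ZMod n ⊕ (Σ i : ZMod n, Fin (a i))) → ℝ}
    (hp : p ∈ t • cosmoPolytope (multicycleEnds n a)) :
    (∃ b, FeasB p b) ∧ ∑ k, p k = t := by
  obtain ⟨q, hq, rfl⟩ := hp
  have h1 : cosmoPolytope (multicycleEnds n a) ⊆ coneSet n a :=
    convexHull_min (fun x hx => vertex_mem_cone hx)
      (fun x hx y hy s r hs hr _ => coneSet_comb hx hy hs hr)
  have h2 : cosmoPolytope (multicycleEnds n a) ⊆ {q | ∑ k, q k = 1} := by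
    refine convexHull_min (fun x hx => ?_) (fun x hx y hy s r hs hr hsr => ?_)
    · obtain ⟨k, j, h⟩ := vertex_cases hx
      rw [Set.mem_ofPred_eq]
      rcases h with h | h | h <;> rw [h] <;>
        simp [Finset.sum_add_distrib, Finset.sum_sub_distrib, -Fintype.sum_sum_type]
    · simp only [Set.mem_ofPred_eq] at *
      simp only [Pi.add_apply, Pi.smul_apply, smul_eq_mul, Finset.sum_add_distrib,
        ← Finset.mul_sum, hx, hy]
      linarith
  constructor
  · have := coneSet_comb (h1 hq) (h1 hq) ht (le_refl (0 : ℝ))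
    rw [zero_smul, add_zero] at this
    obtain ⟨b, c, hb, hc, hD, hX⟩ := this
    refine ⟨fun i => min (b i) (DD (t • q) i), fun i => ⟨le_min (hb i) ?_, min_le_right _ _⟩,
      fun i => ?_⟩
    · exact Finset.sum_nonneg fun j _ => by positivity
    · refine le_trans ?_ (hX i)
      have := min_le_left (b i) (DD (t • q) i)
      have h3 : DD (t • q) (i - 1) - min (b (i - 1)) (DD (t • q) (i - 1)) ≤ c (i - 1) := by
        have := hD (i - 1)
        have := hc (i - 1)
        rcases min_cases (b (i - 1)) (DD (t • q) (i - 1)) with h | h <;> rw [h.1] <;> linarith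
      exact add_le_add this h3
  · have := h2 hq
    simp only [Set.mem_ofPred_eq] at this
    simp only [Pi.smul_apply, smul_eq_mul, ← Finset.mul_sum, this, mul_one]

theorem sum_coord {n : ℕ} [NeZero n] {a : ZMod n → ℕ} {R : Type*} [CommRing R] [LinearOrder R]
    (p : (ZMod n ⊕ (Σ i : ZMod n, Fin (a i))) → R) :
    ∑ k, p k = ∑ i, (XX p i - ∑ j, p (Sum.inr ⟨i, j⟩)) := by
  simp only [XX, Fintype.sum_sum_type, Finset.sum_sub_distrib, Finset.sum_add_distrib,
    Fintype.sum_sigma]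
  have := (Equiv.subRight (1 : ZMod n)).sum_comp (fun i => ∑ j, p (Sum.inr ⟨i, j⟩))
  change ∑ i, ∑ j, p (Sum.inr ⟨i - 1, j⟩) = _ at this
  rw [this]; ring

theorem floor_feas {n : ℕ} {a : ZMod n → ℕ} (p : (ZMod n ⊕ (Σ i : ZMod n, Fin (a i))) → ℤ) :
    (∃ b, FeasB (fun k => (p k : ℝ)) b) ↔ ∃ b, FeasB p b := by
  have hD : ∀ i, DD (fun k => (p k : ℝ)) i = ((DD p i : ℤ) : ℝ) := by
    intro i; simp [DD]
  have hX : ∀ i, XX (fun k => (p k : ℝ)) i = ((XX p i : ℤ) : ℝ) := by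
    intro i; simp [XX]
  simp only [FeasB, hD, hX]
  constructor
  · rintro ⟨b, h1, h2⟩
    refine ⟨fun i => ⌊b i⌋, fun i => ⟨Int.floor_nonneg.2 (h1 i).1, ?_⟩, fun i => ?_⟩
    · have := Int.floor_mono (h1 i).2
      simpa using this
    · have := h2 i
      have h3 : b i ≤ b (i - 1) + ((XX p i - DD p (i - 1) : ℤ) : ℝ) := by
        push_cast; linarith
      have h4 := Int.floor_mono h3
      rw [Int.floor_add_intCast] at h4
      dsimp only
      omega
  · rintro ⟨b, h1, h2⟩
    refine ⟨fun i => b i, fun i => ?_, fun i => ?_⟩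
    · dsimp only; exact_mod_cast h1 i
    · dsimp only; exact_mod_cast h2 i

theorem exists_halfedges {n : ℕ} [NeZero n] {a : ZMod n → ℕ} (ha : ∀ i, 1 ≤ a i)
    {p : (ZMod n ⊕ (Σ i : ZMod n, Fin (a i))) → ℝ} {b : ZMod n → ℝ} (hb : FeasB p b) :
    ∃ β γ : (i : ZMod n) → Fin (a i) → ℝ, (∀ i j, 0 ≤ β i j) ∧ (∀ i j, 0 ≤ γ i j) ∧
      (∀ i j, p (Sum.inr ⟨i, j⟩) ≤ β i j + γ i j) ∧
      ∀ i, ∑ j, 2 * β i j + ∑ j, 2 * γ (i - 1) j = XX p i := by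
  obtain ⟨h1, h2⟩ := hb
  have hρ : ∀ i, ∃ ρ : ℝ, 0 ≤ ρ ∧ ρ ≤ 1 ∧ ρ * DD p i = b i := by
    intro i
    rcases eq_or_ne (DD p i) 0 with h | h
    · refine ⟨0, le_rfl, zero_le_one, ?_⟩
      have := h1 i
      rw [h] at this
      linarith [this.1, this.2]
    · exact ⟨b i / DD p i, div_nonneg (h1 i).1 ((h1 i).1.trans (h1 i).2),
        div_le_one_of_le₀ (h1 i).2 ((h1 i).1.trans (h1 i).2), div_mul_cancel₀ _ h⟩
  choose ρ hρ0 hρ1 hρ using hρ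
  set e : ZMod n → ℝ := fun i => XX p i - (b i + (DD p (i - 1) - b (i - 1))) with he
  have he0 : ∀ i, 0 ≤ e i := fun i => sub_nonneg.2 (h2 i)
  let j0 : ∀ i, Fin (a i) := fun i => ⟨0, ha i⟩
  have hm : ∀ i j, 0 ≤ max (p (Sum.inr ⟨i, j⟩)) 0 := fun i j => le_max_right _ _
  have hite : ∀ i j, 0 ≤ (if j = j0 i then e i / 2 else 0) := by
    intro i j; split_ifs
    · have := he0 i; positivity
    · exact le_rfl
  refine ⟨fun i j => ρ i * max (p (Sum.inr ⟨i, j⟩)) 0 + if j = j0 i then e i / 2 else 0,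
    fun i j => (1 - ρ i) * max (p (Sum.inr ⟨i, j⟩)) 0, ?_, ?_, ?_, ?_⟩
  · intro i j
    exact add_nonneg (mul_nonneg (hρ0 i) (hm i j)) (hite i j)
  · intro i j
    exact mul_nonneg (sub_nonneg.2 (hρ1 i)) (hm i j)
  · intro i j
    have := hite i j
    have := le_max_left (p (Sum.inr ⟨i, j⟩)) 0
    dsimp only
    linarith
  · intro i
    have e1 : ∑ j, 2 * (ρ i * max (p (Sum.inr ⟨i, j⟩)) 0 + if j = j0 i then e i / 2 else 0)
        = ρ i * DD p i + e i := by
      simp only [mul_add, Finset.sum_add_distrib, DD, Finset.mul_sum]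
      congr 1
      · exact Finset.sum_congr rfl fun j _ => by ring
      · rw [← Finset.mul_sum, Finset.sum_ite_eq' Finset.univ (j0 i)]
        simp only [Finset.mem_univ, if_true]
        ring
    have e2 : ∑ j, 2 * ((1 - ρ (i - 1)) * max (p (Sum.inr ⟨i - 1, j⟩)) 0)
        = DD p (i - 1) - ρ (i - 1) * DD p (i - 1) := by
      simp only [DD, Finset.mul_sum, ← Finset.sum_sub_distrib]
      exact Finset.sum_congr rfl fun j _ => by ring
    rw [e1, e2, hρ, hρ, he]
    ring

theorem feas_imp_mem {n : ℕ} [NeZero n] {a : ZMod n → ℕ} (ha : ∀ i, 1 ≤ a i)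
    {p : (ZMod n ⊕ (Σ i : ZMod n, Fin (a i))) → ℝ} {b : ZMod n → ℝ} (hb : FeasB p b)
    {t : ℝ} (ht : 0 < t) (hp : ∑ k, p k = t) :
    p ∈ t • cosmoPolytope (multicycleEnds n a) := by
  obtain ⟨β, γ, hβ, hγ, hy, hX⟩ := exists_halfedges ha hb
  let sg : (ZMod n ⊕ (Σ i : ZMod n, Fin (a i))) →
    ((ZMod n ⊕ (Σ i : ZMod n, Fin (a i))) → ℝ) := fun k => Pi.single k 1
  let w : (Σ i : ZMod n, Fin (a i)) × Fin 3 → ℝ := fun x =>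
    ![β x.1.1 x.1.2 + γ x.1.1 x.1.2 - p (Sum.inr x.1), β x.1.1 x.1.2, γ x.1.1 x.1.2] x.2
  let v : (Σ i : ZMod n, Fin (a i)) × Fin 3 →
      ((ZMod n ⊕ (Σ i : ZMod n, Fin (a i))) → ℝ) := fun x =>
    ![sg (Sum.inl x.1.1) + sg (Sum.inl (x.1.1 + 1)) - sg (Sum.inr x.1),
      sg (Sum.inl x.1.1) - sg (Sum.inl (x.1.1 + 1)) + sg (Sum.inr x.1),
      -sg (Sum.inl x.1.1) + sg (Sum.inl (x.1.1 + 1)) + sg (Sum.inr x.1)] x.2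
  have hw : ∀ x ∈ Finset.univ, 0 ≤ w x := by
    rintro ⟨⟨i, j⟩, k⟩ -
    fin_cases k
    · exact sub_nonneg.2 (hy i j)
    · exact hβ i j
    · exact hγ i j
  have hv : ∀ x ∈ Finset.univ, v x ∈ cosmoVertices (multicycleEnds n a) := by
    rintro ⟨f, k⟩ -
    refine ⟨f, f.1, f.1 + 1, rfl, ?_⟩
    fin_cases k
    · exact Or.inl rfl
    · exact Or.inr (Or.inl rfl)
    · exact Or.inr (Or.inr rfl)
  have hsum : ∑ x, w x • v x = p := by
    have h1 : ∑ x, w x • v x = ∑ f : (Σ i : ZMod n, Fin (a i)),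
        ((2 * β f.1 f.2 - p (Sum.inr f)) • sg (Sum.inl f.1) +
          (2 * γ f.1 f.2 - p (Sum.inr f)) • sg (Sum.inl (f.1 + 1)) +
          p (Sum.inr f) • sg (Sum.inr f)) := by
      rw [Fintype.sum_prod_type]
      refine Finset.sum_congr rfl fun f _ => ?_
      rw [Fin.sum_univ_three]
      simp only [w, v, Matrix.cons_val_zero, Matrix.cons_val_one, Matrix.cons_val]
      module
    rw [h1]
    funext k
    rw [Finset.sum_apply]
    simp only [Pi.add_apply, Pi.smul_apply, smul_eq_mul, sg]
    rcases k with i | g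
    · have h2 := hX i
      have key : ∀ k : ZMod n, (i = k + 1) = (i - 1 = k) := fun k => by
        rw [sub_eq_iff_eq_add]
      simp only [ne_eq, reduceCtorEq, not_false_eq_true, Pi.single_eq_of_ne, mul_zero, add_zero]
      simp only [Pi.single_apply, Sum.inl.injEq, key, Finset.sum_add_distrib, Fintype.sum_sigma,
        mul_ite, mul_one, mul_zero]
      have hs : ∀ (i : ZMod n) (g : ∀ x : ZMod n, Fin (a x) → ℝ),
          (∑ x, ∑ j, if i = x then g x j else 0) = ∑ j, g i j := by
        intro i g
        rw [Finset.sum_eq_single i]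
        · simp
        · intro x _ hx
          simp [hx.symm]
        · simp
      rw [hs i (fun x j => 2 * β x j - p (Sum.inr ⟨x, j⟩)),
        hs (i - 1) (fun x j => 2 * γ x j - p (Sum.inr ⟨x, j⟩))]
      simp only [Finset.sum_sub_distrib]
      rw [XX] at h2
      linarith
    · simp only [ne_eq, reduceCtorEq, not_false_eq_true, Pi.single_eq_of_ne, mul_zero, zero_add]
      simp [Pi.single_apply]
  have hwt : ∑ x, w x = t := by
    rw [← hp]
    have h3 : ∀ x, ∑ k, v x k = 1 := by
      rintro ⟨f, k⟩
      fin_cases k <;>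
        simp [v, sg, Finset.sum_add_distrib, Finset.sum_sub_distrib, -Fintype.sum_sum_type]
    rw [← hsum]
    simp only [Finset.sum_apply, Pi.smul_apply, smul_eq_mul]
    rw [Finset.sum_comm]
    simp only [← Finset.mul_sum, h3, mul_one]
  have := Finset.centerMass_mem_convexHull Finset.univ hw (by rw [hwt]; exact ht) hv
  refine ⟨_, this, ?_⟩
  simp only [Finset.centerMass, hwt, hsum]
  rw [smul_smul, mul_inv_cancel₀ ht.ne', one_smul]

/-! ### The bijection -/

section bij
variable {n : ℕ} {a : ZMod n → ℕ}

/-- The lattice point attached to a configuration. -/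
def toPt (q : ∀ i : ZMod n, (Fin (a i) → ℤ) × ℕ) (b : ZMod n → ℤ) :
    (ZMod n ⊕ (Σ i : ZMod n, Fin (a i))) → ℤ
  | Sum.inr f => (q f.1).1 f.2
  | Sum.inl i => b i + (q i).2 + (dem (q (i - 1)).1 - b (i - 1)) - ∑ j, (q i).1 j -
      ∑ j, (q (i - 1)).1 j

theorem DD_toPt (q : ∀ i : ZMod n, (Fin (a i) → ℤ) × ℕ) (b : ZMod n → ℤ) (i : ZMod n) :
    DD (toPt q b) i = dem (q i).1 := rfl

theorem XX_toPt (q : ∀ i : ZMod n, (Fin (a i) → ℤ) × ℕ) (b : ZMod n → ℤ) (i : ZMod n) :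
    XX (toPt q b) i = b i + (q i).2 + (dem (q (i - 1)).1 - b (i - 1)) := by
  simp only [XX, toPt]; ring

theorem sum_toPt [NeZero n] (q : ∀ i : ZMod n, (Fin (a i) → ℤ) × ℕ) (b : ZMod n → ℤ) :
    ∑ k, toPt q b k = ((∑ i, wt (q i) : ℕ) : ℤ) := by
  rw [sum_coord]
  simp only [XX_toPt]
  have h1 := (Equiv.subRight (1 : ZMod n)).sum_comp (fun i => dem (q i).1 - b i)
  change ∑ i, (dem (q (i - 1)).1 - b (i - 1)) = _ at h1
  rw [Finset.sum_sub_distrib, Finset.sum_add_distrib, h1, ← Finset.sum_add_distrib,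
    ← Finset.sum_sub_distrib]
  push_cast
  refine Finset.sum_congr rfl fun i _ => ?_
  have h2 : dem (q i).1 - ∑ j, (q i).1 j = ∑ j, |(q i).1 j| := by
    rw [dem, ← Finset.sum_sub_distrib]
    refine Finset.sum_congr rfl fun j _ => ?_
    rcases le_total 0 ((q i).1 j) with h | h
    · rw [max_eq_left h, abs_of_nonneg h]; ring
    · rw [max_eq_right h, abs_of_nonpos h]; ring
  have h3 : ((wt (q i) : ℕ) : ℤ) = ∑ j, |(q i).1 j| + (q i).2 := by
    simp [wt]
  rw [h3, ← h2]
  simp only [toPt]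
  ring

/-- All admissible routings. -/
noncomputable def Aset {m : ℕ} (q : (Fin m → ℤ) × ℕ) : Finset ℤ :=
  if q.2 = 0 then Finset.Icc 0 (dem q.1) else {dem q.1}

/-- Non-saturated routings. -/
noncomputable def Nset {m : ℕ} (q : (Fin m → ℤ) × ℕ) : Finset ℤ :=
  if q.2 = 0 then Finset.Ico 0 (dem q.1) else ∅

theorem mem_Aset {m : ℕ} (q : (Fin m → ℤ) × ℕ) (b : ℤ) :
    b ∈ Aset q ↔ 0 ≤ b ∧ b ≤ dem q.1 ∧ (b = dem q.1 ∨ q.2 = 0) := by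
  have := dem_nonneg q.1
  unfold Aset
  split_ifs with h <;> simp [h]
  omega

theorem mem_Nset {m : ℕ} (q : (Fin m → ℤ) × ℕ) (b : ℤ) :
    b ∈ Nset q ↔ b ∈ Aset q ∧ b ≠ dem q.1 := by
  rw [mem_Aset]
  unfold Nset
  split_ifs with h <;> simp [h]
  omega

theorem card_Aset {m : ℕ} (q : (Fin m → ℤ) × ℕ) :
    ((Aset q).card : ℚ) = 1 + (dem q.1 : ℚ) * if q.2 = 0 then 1 else 0 := by
  have h0 := dem_nonneg q.1
  unfold Aset
  split_ifs with h
  · have : (((Finset.Icc 0 (dem q.1)).card : ℤ) : ℚ) = ((1 + dem q.1 : ℤ) : ℚ) := by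
      rw [Int.card_Icc]; congr 1; omega
    push_cast at this ⊢
    rw [this]; ring
  · simp

theorem card_Nset {m : ℕ} (q : (Fin m → ℤ) × ℕ) :
    ((Nset q).card : ℚ) = (dem q.1 : ℚ) * if q.2 = 0 then 1 else 0 := by
  have h0 := dem_nonneg q.1
  unfold Nset
  split_ifs with h
  · have : (((Finset.Ico 0 (dem q.1)).card : ℤ) : ℚ) = ((dem q.1 : ℤ) : ℚ) := by
      rw [Int.card_Ico]; congr 1; omega
    push_cast at this ⊢
    rw [this]; ring
  · simp

/-- Admissible routings with at least one saturated class. -/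
noncomputable def Bset [NeZero n] (q : ∀ i : ZMod n, (Fin (a i) → ℤ) × ℕ) : Finset (ZMod n → ℤ) :=
  (Fintype.piFinset fun i => Aset (q i)) \ (Fintype.piFinset fun i => Nset (q i))

theorem mem_Bset [NeZero n] (q : ∀ i : ZMod n, (Fin (a i) → ℤ) × ℕ) (b : ZMod n → ℤ) :
    b ∈ Bset q ↔ (∀ i, 0 ≤ b i ∧ b i ≤ dem (q i).1 ∧ (b i = dem (q i).1 ∨ (q i).2 = 0)) ∧
      ∃ i, b i = dem (q i).1 := by
  simp only [Bset, Finset.mem_sdiff, Fintype.mem_piFinset, mem_Nset, mem_Aset]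
  refine and_congr_right fun h => ?_
  push Not
  exact ⟨fun ⟨i, hi⟩ => ⟨i, hi (h i)⟩, fun ⟨i, hi⟩ => ⟨i, fun _ => hi⟩⟩

theorem card_Bset [NeZero n] (q : ∀ i : ZMod n, (Fin (a i) → ℤ) × ℕ) :
    ((Bset q).card : ℚ) = ∏ i, (1 + (dem (q i).1 : ℚ) * if (q i).2 = 0 then 1 else 0) -
      ∏ i, ((dem (q i).1 : ℚ) * if (q i).2 = 0 then 1 else 0) := by
  have hsub : (Fintype.piFinset fun i => Nset (q i)) ⊆ Fintype.piFinset fun i => Aset (q i) :=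
    Fintype.piFinset_subset _ _ fun i x hx => ((mem_Nset _ _).1 hx).1
  rw [Bset, Finset.cast_card_sdiff hsub, Fintype.card_piFinset, Fintype.card_piFinset]
  push_cast
  simp only [card_Aset, card_Nset]

theorem cyc_all [NeZero n] {P : ZMod n → Prop} (h : ∀ i, P i → P (i - 1)) {i : ZMod n} (hi : P i)
    (k : ZMod n) : P k := by
  have h1 : ∀ m : ℕ, P (i - m) := by
    intro m
    induction m with
    | zero => simpa using hi
    | succ m ih => have := h _ ih; rwa [sub_sub, ← Nat.cast_succ] at this
  have := h1 (i - k).val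
  rwa [ZMod.natCast_zmod_val, sub_sub_cancel] at this

theorem routing_le [NeZero n] {q q' : ∀ i : ZMod n, (Fin (a i) → ℤ) × ℕ} {b b' : ZMod n → ℤ}
    (hb : b ∈ Bset q) (hb' : b' ∈ Bset q') (h : toPt q b = toPt q' b') (i : ZMod n) :
    b' i ≤ b i := by
  rw [mem_Bset] at hb hb'
  have hX : ∀ i, XX (toPt q b) i = XX (toPt q' b') i := by rw [h]; exact fun _ => rfl
  have hD : ∀ i, dem (q i).1 = dem (q' i).1 := fun i => by
    rw [← DD_toPt q b, ← DD_toPt q' b', h]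
  simp only [XX_toPt] at hX
  by_contra hlt
  have := cyc_all (P := fun i => b i < b' i) (fun i hi => by
    have h1 := hb.1 i
    have h2 := hb'.1 i
    have h3 := hX i
    have h4 := hD i
    have h5 := hD (i - 1)
    omega) (not_le.1 hlt)
  obtain ⟨k, hk⟩ := hb.2
  have h1 := this k
  have h2 := hb'.1 k
  have h3 := hD k
  omega

theorem toPt_inj [NeZero n] {q q' : ∀ i : ZMod n, (Fin (a i) → ℤ) × ℕ} {b b' : ZMod n → ℤ}
    (hb : b ∈ Bset q) (hb' : b' ∈ Bset q') (h : toPt q b = toPt q' b') : q = q' ∧ b = b' := by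
  have hbb : b = b' := funext fun i => le_antisymm (routing_le hb' hb h.symm i)
    (routing_le hb hb' h i)
  subst hbb
  refine ⟨?_, rfl⟩
  have hX : ∀ i, XX (toPt q b) i = XX (toPt q' b) i := by rw [h]; exact fun _ => rfl
  have hD : ∀ i, dem (q i).1 = dem (q' i).1 := fun i => by
    rw [← DD_toPt q b, ← DD_toPt q' b, h]
  simp only [XX_toPt] at hX
  funext i
  ext j
  · exact congrFun h (Sum.inr ⟨i, j⟩)
  · have := hX i
    have := hD (i - 1)
    omega

theorem toPt_surj [NeZero n] (p : (ZMod n ⊕ (Σ i : ZMod n, Fin (a i))) → ℤ)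
    (hp : ∃ b, FeasB p b) : ∃ q b, b ∈ Bset q ∧ toPt q b = p := by
  have hfin : {b | FeasB p b}.Finite := (Set.finite_Icc (0 : ZMod n → ℤ) (DD p)).subset
    fun b hb => ⟨fun i => (hb.1 i).1, fun i => (hb.1 i).2⟩
  obtain ⟨b, hb, hmax⟩ := Set.exists_max_image _ (fun b : ZMod n → ℤ => ∑ i, b i) hfin hp
  have hb' : FeasB p b := hb
  obtain ⟨h1, h2⟩ := hb'
  refine ⟨fun i => (fun j => p (Sum.inr ⟨i, j⟩),
    (XX p i - (b i + (DD p (i - 1) - b (i - 1)))).toNat), b, ?_, ?_⟩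
  · rw [mem_Bset]
    constructor
    · intro i
      refine ⟨(h1 i).1, (h1 i).2, ?_⟩
      by_contra hcon
      push Not at hcon
      obtain ⟨hc1, hc2⟩ := hcon
      have hc1 : b i ≠ DD p i := hc1
      dsimp only at hc2
      have hbi := h1 i
      have : FeasB p (b + Pi.single i 1) := by
        constructor
        · intro k
          have := h1 k
          rcases eq_or_ne k i with rfl | hk
          · simp only [Pi.add_apply, Pi.single_eq_same]; omega
          · simpa [hk] using this
        · intro k
          have h3 := h2 k
          have h4 : (0 : ℤ) ≤ (Pi.single i 1 : ZMod n → ℤ) (k - 1) := by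
            rw [Pi.single_apply]; split_ifs <;> norm_num
          simp only [Pi.add_apply]
          rcases eq_or_ne k i with rfl | hk
          · simp only [Pi.single_eq_same]; omega
          · rw [Pi.single_eq_of_ne hk]; omega
      have := hmax _ this
      simp [Finset.sum_add_distrib] at this
    · by_contra hcon
      push Not at hcon
      have hcon : ∀ i, b i ≠ DD p i := hcon
      have : FeasB p (b + 1) := by
        constructor
        · intro k
          have := h1 k
          have := hcon k
          simp only [Pi.add_apply, Pi.one_apply]; omega
        · intro k
          have := h2 k
          simp only [Pi.add_apply, Pi.one_apply]; omega
      have := hmax _ this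
      have hn : 0 < n := Nat.pos_of_ne_zero (NeZero.ne n)
      simp [Finset.sum_add_distrib] at this
      omega
  · funext k
    rcases k with i | f
    · have h3 := h2 i
      have h4 : dem (fun j => p (Sum.inr ⟨i - 1, j⟩)) = DD p (i - 1) := rfl
      simp only [toPt, h4]
      rw [Int.toNat_of_nonneg (by omega)]
      simp only [XX]; ring
    · rfl

theorem count_eq [NeZero n] (F : ℕ → Finset (∀ i : ZMod n, (Fin (a i) → ℤ) × ℕ))
    (hF : ∀ t q, q ∈ F t ↔ ∑ i, wt (q i) = t) (t : ℕ) :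
    ({p : (ZMod n ⊕ (Σ i : ZMod n, Fin (a i))) → ℤ |
      (∃ b, FeasB p b) ∧ ∑ k, p k = (t : ℤ)}).ncard = ∑ q ∈ F t, (Bset q).card := by
  rw [← Finset.card_sigma]
  have : {p : (ZMod n ⊕ (Σ i : ZMod n, Fin (a i))) → ℤ |
      (∃ b, FeasB p b) ∧ ∑ k, p k = (t : ℤ)} =
      (fun x : (Σ _ : (∀ i : ZMod n, (Fin (a i) → ℤ) × ℕ), ZMod n → ℤ) => toPt x.1 x.2) ''
        (((F t).sigma fun q => Bset q : Finset _) : Set _) := by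
    ext p
    simp only [Set.mem_ofPred_eq, Set.mem_image, Finset.mem_coe, Finset.mem_sigma, hF]
    constructor
    · rintro ⟨h1, h2⟩
      obtain ⟨q, b, hb, rfl⟩ := toPt_surj p h1
      refine ⟨⟨q, b⟩, ⟨?_, hb⟩, rfl⟩
      rw [sum_toPt] at h2
      exact_mod_cast h2
    · rintro ⟨⟨q, b⟩, ⟨h1, h2⟩, rfl⟩
      refine ⟨⟨b, ?_, ?_⟩, ?_⟩
      · intro i
        have := ((mem_Bset q b).1 h2).1 i
        rw [DD_toPt]
        exact ⟨this.1, this.2.1⟩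
      · intro i
        rw [XX_toPt, DD_toPt]
        dsimp only
        omega
      · dsimp only at h1 ⊢
        rw [sum_toPt, h1]
  rw [this, Set.InjOn.ncard_image, Set.ncard_coe_finset]
  rintro ⟨q, b⟩ hx ⟨q', b'⟩ hy h
  simp only [Finset.mem_coe, Finset.mem_sigma] at hx hy
  obtain ⟨rfl, rfl⟩ := toPt_inj hx.2 hy.2 h
  rfl

theorem latticePointCount_eq [NeZero n] (ha : ∀ i, 1 ≤ a i) {t : ℕ} (ht : 0 < t) :
    latticePointCount (cosmoPolytope (multicycleEnds n a)) t =
      ({p : (ZMod n ⊕ (Σ i : ZMod n, Fin (a i))) → ℤ |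
        (∃ b, FeasB p b) ∧ ∑ k, p k = (t : ℤ)}).ncard := by
  unfold latticePointCount
  congr 1
  ext p
  simp only [Set.mem_ofPred_eq]
  rw [← floor_feas]
  constructor
  · intro h
    obtain ⟨h1, h2⟩ := mem_dilate_imp (Nat.cast_nonneg t) h
    refine ⟨h1, ?_⟩
    exact_mod_cast h2
  · rintro ⟨⟨b, hb⟩, h2⟩
    refine feas_imp_mem ha hb (by exact_mod_cast ht) ?_
    exact_mod_cast h2

end bij

theorem factor_N (m : ℕ) (hm : 1 ≤ m) :
    ((m : PowerSeries ℚ) * (2 * PowerSeries.X * geo ^ 2) *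
      ((1 + PowerSeries.X) * geo) ^ (m - 1)) * (1 - PowerSeries.X) ^ (m + 1) =
      2 * (m : PowerSeries ℚ) * PowerSeries.X * (1 + PowerSeries.X) ^ (m - 1) := by
  obtain ⟨k, rfl⟩ : ∃ k, m = k + 1 := ⟨m - 1, by omega⟩
  rw [Nat.add_sub_cancel]
  have h : (geo * (1 - PowerSeries.X)) ^ (k + 2) = 1 := by rw [geo_mul, one_pow]
  calc _ = 2 * ((k + 1 : ℕ) : PowerSeries ℚ) * PowerSeries.X * (1 + PowerSeries.X) ^ k *
        (geo * (1 - PowerSeries.X)) ^ (k + 2) := by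
        rw [mul_pow, mul_pow]; ring
    _ = _ := by rw [h, mul_one]

theorem factor_T (m : ℕ) (hm : 1 ≤ m) :
    (((1 + PowerSeries.X) * geo) ^ m * geo + (m : PowerSeries ℚ) * (2 * PowerSeries.X * geo ^ 2) *
      ((1 + PowerSeries.X) * geo) ^ (m - 1)) * (1 - PowerSeries.X) ^ (m + 1) =
      (1 + PowerSeries.X) ^ m +
        2 * (m : PowerSeries ℚ) * PowerSeries.X * (1 + PowerSeries.X) ^ (m - 1) := by
  rw [add_mul, factor_N m hm]
  congr 1
  have h : (geo * (1 - PowerSeries.X)) ^ (m + 1) = 1 := by rw [geo_mul, one_pow]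
  calc _ = (1 + PowerSeries.X) ^ m * (geo * (1 - PowerSeries.X)) ^ (m + 1) := by
        rw [mul_pow, mul_pow]; ring
    _ = _ := by rw [h, mul_one]

theorem ehrhart_eq {n : ℕ} [NeZero n] {a : ZMod n → ℕ} (ha : ∀ i, 1 ≤ a i) :
    ehrhartSeries (cosmoPolytope (multicycleEnds n a)) =
      ∏ i, (((1 + PowerSeries.X) * geo) ^ (a i) * geo +
        (a i : PowerSeries ℚ) * (2 * PowerSeries.X * geo ^ 2) *
          ((1 + PowerSeries.X) * geo) ^ (a i - 1)) -
      ∏ i, ((a i : PowerSeries ℚ) * (2 * PowerSeries.X * geo ^ 2) *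
          ((1 + PowerSeries.X) * geo) ^ (a i - 1)) := by
  obtain ⟨F, hF, hT⟩ := IsGF.pi (fun i => isGF_T (a i))
  obtain ⟨F', hF', hN⟩ := IsGF.pi (fun i => isGF_N (a i))
  obtain rfl : F' = F := by
    funext t; ext x; rw [hF, hF']
  ext t
  rw [ehrhartSeries, PowerSeries.coeff_mk]
  rcases Nat.eq_zero_or_pos t with rfl | ht
  · have h0 := coeff_geo 0
    rw [PowerSeries.coeff_zero_eq_constantCoeff] at h0
    simp [map_prod, h0, NeZero.ne n]
  · rw [if_neg ht.ne', latticePointCount_eq ha ht, count_eq F' hF, map_sub, hT, hN,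
      ← Finset.sum_sub_distrib]
    push_cast
    exact Finset.sum_congr rfl fun q _ => card_Bset q

/-- Let `n ≥ 3` and `a = (a_1, …, a_n)` with all `a_i ≥ 1`.  The
`h*`-polynomial of the cosmological polytope of the multicycle `C_a` is
`h*(C_{C_a}; z) = ∏_i ((1+z)^{a_i} + 2 a_i z (1+z)^{a_i−1}) − ∏_i 2 a_i z (1+z)^{a_i−1}`. -/
theorem hstar_multicycle (n : ℕ) [NeZero n] (hn : 3 ≤ n)
    (a : ZMod n → ℕ) (ha : ∀ i, 1 ≤ a i) :
    IsHStarPoly (cosmoPolytope (multicycleEnds n a))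
      (Fintype.card (ZMod n) + Fintype.card (Σ i : ZMod n, Fin (a i)) - 1)
      ((∏ i : ZMod n, ((1 + Polynomial.X) ^ (a i) +
          2 * (a i : Polynomial ℚ) * Polynomial.X * (1 + Polynomial.X) ^ (a i - 1))) -
        ∏ i : ZMod n,
          2 * (a i : Polynomial ℚ) * Polynomial.X * (1 + Polynomial.X) ^ (a i - 1)) := by
  unfold IsHStarPoly
  have hd : Fintype.card (ZMod n) + Fintype.card (Σ i : ZMod n, Fin (a i)) - 1 + 1 =
      ∑ i : ZMod n, (a i + 1) := by
    rw [Nat.sub_add_cancel (by have := Fintype.card_pos (α := ZMod n); omega),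
      Fintype.card_sigma, Finset.sum_add_distrib]
    simp [add_comm]
  rw [hd, ehrhart_eq ha, ← Finset.prod_pow_eq_pow_sum, sub_mul, ← Finset.prod_mul_distrib,
    ← Finset.prod_mul_distrib, Finset.prod_congr rfl (fun i _ => factor_T (a i) (ha i)),
    Finset.prod_congr rfl (fun i _ => factor_N (a i) (ha i))]
  rw [← Polynomial.coeToPowerSeries.ringHom_apply]
  simp only [map_sub, map_prod, map_add, map_mul, map_pow, map_one, map_natCast, map_ofNat]
  simp only [Polynomial.coeToPowerSeries.ringHom_apply, Polynomial.coe_X]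
end
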